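/- Let n, q ∈ ℕ with q ≥ 2, p = (p₁,…,p_{q−1}) ∈ ℕ₀^{q−1} with at least one p_i ≠ 0, let Q ∈ ℝ[X₁,…,Xₙ] be a polynomial of degree d, let Θ ∈ M_n(ℝ) be such that (1/2π)Θ is a diophantine matrix, and let ã ∈ 𝒮((ℤⁿ)^{2q}). Then the function f(s) := Σ_{l∈((ℤⁿ)^q)²} ã_l Σ'_{k∈ℤⁿ} ∏_{i=1}^{q−1} |k + l̃_i|^{p_i} · |k|^{−s} Q(k) e^{i k·Θ(l₁+⋯+l_q)} has a meromorphic continuation to the whole complex plane ℂ, with at most simple poles, all contained in the set { n + d + |p|₁ − m : m ∈ ℕ₀ }. -/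

import Mathlib

open Filter Topology

noncomputable section

/-- Euclidean norm of an integer vector `k ∈ ℤⁿ`. -/
def znorm {n : ℕ} (k : Fin n → ℤ) : ℝ := Real.sqrt (∑ i, ((k i : ℝ)) ^ 2)

/-- Schwartz (rapidly decreasing) sequences on `(ℤⁿ)^m`. -/
def IsSchwartzSeq {m n : ℕ} (b : (Fin m → Fin n → ℤ) → ℂ) : Prop :=
  ∀ r : ℕ, ∃ C : ℝ, ∀ l : Fin m → Fin n → ℤ,
    (1 + ∑ i, ∑ a, ((l i a : ℝ)) ^ 2) ^ r * ‖b l‖ ^ 2 ≤ C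

/-- A vector `a ∈ ℝⁿ` is diophantine. -/
def IsDiophantineVector {n : ℕ} (a : Fin n → ℝ) : Prop :=
  ∃ δ : ℝ, 0 < δ ∧ ∃ c : ℝ, 0 < c ∧ ∀ q : Fin n → ℤ, q ≠ 0 → ∀ m : ℤ,
    c * znorm q ^ (-δ) ≤ |(∑ i, (q i : ℝ) * a i) - (m : ℝ)|

/-- A matrix `Θ ∈ Mₙ(ℝ)` is diophantine if `ᵗΘ(u)` is a diophantine vector
for some `u ∈ ℤⁿ`. -/
def IsDiophantineMatrix {n : ℕ} (Θ : Matrix (Fin n) (Fin n) ℝ) : Prop :=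
  ∃ u : Fin n → ℤ, IsDiophantineVector (Θ.transpose.mulVec fun i => (u i : ℝ))

/-- For `l = (l₁,…,l_{2q}) ∈ (ℤⁿ)^{2q}` (0-indexed) and `1 ≤ j ≤ q`, the vector
`l̃_j = l₁ + ⋯ + l_j + l_{q+1} + ⋯ + l_{q+j}`. -/
def ltilde {q n : ℕ} (l : Fin (2 * q) → Fin n → ℤ) (j : ℕ) : Fin n → ℤ :=
  ∑ t ∈ Finset.univ.filter
      (fun t : Fin (2 * q) => (t : ℕ) < j ∨ (q ≤ (t : ℕ) ∧ (t : ℕ) < q + j)), l t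

/-- The sum `l₁ + ⋯ + l_q` of the first `q` components of `l ∈ (ℤⁿ)^{2q}`. -/
def lsumq {q n : ℕ} (l : Fin (2 * q) → Fin n → ℤ) : Fin n → ℤ :=
  ∑ t ∈ Finset.univ.filter (fun t : Fin (2 * q) => (t : ℕ) < q), l t

/-- The inner term `∏_{i=1}^{q-1} |k+l̃ᵢ|^{pᵢ} |k|^{-s} Q(k) e^{i k·Θ(l₁+⋯+l_q)}`
(term at `k = 0` omitted). -/
def bigTerm {q n : ℕ} (p : Fin (q - 1) → ℕ) (Q : MvPolynomial (Fin n) ℝ)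
    (Θ : Matrix (Fin n) (Fin n) ℝ) (s : ℂ) (l : Fin (2 * q) → Fin n → ℤ)
    (k : Fin n → ℤ) : ℂ :=
  if k = 0 then 0 else
    (∏ i : Fin (q - 1), ((znorm (k + ltilde l ((i : ℕ) + 1)) : ℝ) : ℂ) ^ (p i)) *
      ((znorm k : ℂ) ^ s)⁻¹ *
      ((MvPolynomial.eval (fun a => ((k a : ℤ) : ℝ)) Q : ℝ) : ℂ) *
      Complex.exp (Complex.I *
        ((∑ a, (k a : ℝ) * (Θ.mulVec fun j => ((lsumq l j : ℤ) : ℝ)) a : ℝ) : ℂ))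

theorem pi_hasSum {β : Type*} (n : ℕ) (f : Fin n → β → ℂ)
    (hf : ∀ i, Summable fun b => ‖f i b‖) :
    (Summable fun k : Fin n → β => ‖∏ i, f i (k i)‖) ∧
    ∑' k : Fin n → β, ∏ i, f i (k i) = ∏ i, ∑' b, f i b := by
  induction n with
  | zero =>
    constructor
    · exact Summable.of_finite
    · simp
  | succ n ih =>
    obtain ⟨h1, h2⟩ := ih (fun i => f i.succ) (fun i => hf i.succ)
    have e := Fin.consEquiv (fun _ : Fin (n+1) => β)
    have hs := summable_mul_of_summable_norm (hf 0) h1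
    constructor
    · rw [← (Fin.consEquiv (fun _ : Fin (n+1) => β)).summable_iff]
      refine (Summable.mul_norm (hf 0) h1).congr ?_
      rintro ⟨b, k⟩
      simp [Fin.prod_univ_succ, Fin.consEquiv]
    · rw [← (Fin.consEquiv (fun _ : Fin (n+1) => β)).tsum_eq, Fin.prod_univ_succ, ← h2,
        tsum_mul_tsum_of_summable_norm (hf 0) h1]
      apply tsum_congr
      rintro ⟨b, k⟩
      simp [Fin.prod_univ_succ, Fin.consEquiv]

theorem summable_int_base (r : ℝ) (hr : 1 < r) :
    Summable fun k : ℤ => (1 + (k : ℝ) ^ 2) ^ (-r / 2) := by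
  have h := (Real.summable_abs_int_rpow hr)
  rw [← (Set.finite_singleton (0:ℤ)).summable_compl_iff] at h ⊢
  refine Summable.of_nonneg_of_le (fun k => by dsimp; positivity) (fun k => ?_) h
  dsimp only [Function.comp]
  have hk : (k.1 : ℝ) ≠ 0 := by exact_mod_cast k.2
  have : |(k.1 : ℝ)| ^ (-r) = (|(k.1:ℝ)| ^ 2) ^ (-r/2) := by
    rw [← Real.rpow_natCast, ← Real.rpow_mul (abs_nonneg _)]; congr 1; push_cast; ring
  rw [this]
  apply Real.rpow_le_rpow_of_nonpos
  · positivity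
  · rw [sq_abs]; linarith
  · linarith

theorem znorm_nonneg {n : ℕ} (k : Fin n → ℤ) : 0 ≤ znorm k := Real.sqrt_nonneg _

theorem znorm_sq {n : ℕ} (k : Fin n → ℤ) : znorm k ^ 2 = ∑ i, (k i : ℝ) ^ 2 :=
  Real.sq_sqrt (Finset.sum_nonneg fun _ _ => sq_nonneg _)

theorem abs_le_znorm {n : ℕ} (k : Fin n → ℤ) (i : Fin n) : |(k i : ℝ)| ≤ znorm k := by
  apply Real.abs_le_sqrt
  exact Finset.single_le_sum (f := fun i => (k i : ℝ)^2) (fun _ _ => sq_nonneg _) (Finset.mem_univ i)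

theorem one_le_znorm {n : ℕ} {k : Fin n → ℤ} (hk : k ≠ 0) : 1 ≤ znorm k := by
  obtain ⟨i, hi⟩ := Function.ne_iff.1 hk
  refine le_trans ?_ (abs_le_znorm k i)
  exact_mod_cast Int.one_le_abs hi

theorem znorm_le_sum {n : ℕ} (k : Fin n → ℤ) : znorm k ≤ ∑ i, |(k i : ℝ)| := by
  apply Real.sqrt_le_iff.2
  refine ⟨Finset.sum_nonneg fun _ _ => abs_nonneg _, ?_⟩
  simpa using Finset.sum_sq_le_sq_sum_of_nonneg (s := Finset.univ) (f := fun i => |(k i : ℝ)|) (fun i _ => abs_nonneg _)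

theorem summable_znorm (n : ℕ) (hn : 0 < n) (r : ℝ) (hr : (n:ℝ) < r) :
    Summable fun k : Fin n → ℤ => if k = 0 then 0 else znorm k ^ (-r) := by
  have hn' : (0:ℝ) < n := by exact_mod_cast hn
  have h1 : 1 < r / n := by rwa [lt_div_iff₀ hn', one_mul]
  have hb := summable_int_base (r / n) h1
  have h := (pi_hasSum n (fun _ (k : ℤ) => (((1 + (k : ℝ) ^ 2) ^ (-(r/n) / 2) : ℝ) : ℂ))
    (fun i => by
      refine hb.congr fun k => ?_
      rw [Complex.norm_real, Real.norm_of_nonneg (by positivity)])).1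
  refine Summable.of_nonneg_of_le (fun k => ?_) (fun k => ?_) (h.mul_left ((2:ℝ) ^ (r/2)))
  · split_ifs
    · rfl
    · exact Real.rpow_nonneg (znorm_nonneg _) _
  · split_ifs with hk
    · positivity
    · have hz := one_le_znorm hk
      have hz0 : 0 < znorm k := by linarith
      rw [norm_prod]
      have : ∀ i ∈ Finset.univ, (2 * znorm k ^ 2) ^ (-(r/n)/2) ≤ ‖(((1 + (k i : ℝ) ^ 2) ^ (-(r/n) / 2) : ℝ) : ℂ)‖ := by
        intro i _
        rw [Complex.norm_real, Real.norm_of_nonneg (by positivity)]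
        apply Real.rpow_le_rpow_of_nonpos
        · positivity
        · have := abs_le_znorm k i
          have h2 : (k i : ℝ)^2 ≤ znorm k ^ 2 := by
            rw [← sq_abs]; gcongr
          nlinarith
        · have : 0 < r / n := by linarith
          linarith
      have h3 := Finset.prod_le_prod (s := Finset.univ) (fun i _ => by positivity) this
      rw [Finset.prod_const, Finset.card_univ, Fintype.card_fin, ← Real.rpow_natCast,
        ← Real.rpow_mul (by positivity)] at h3
      have e1 : -(r / n) / 2 * (n:ℝ) = -(r/2) := by field_simp
      rw [e1, Real.mul_rpow (by norm_num) (by positivity)] at h3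
      have e2 : (znorm k ^ 2) ^ (-(r/2)) = znorm k ^ (-r) := by
        rw [← Real.rpow_natCast, ← Real.rpow_mul hz0.le]; congr 1; push_cast; ring
      rw [e2] at h3
      calc znorm k ^ (-r) = 2 ^ (r/2) * (2 ^ (-(r/2)) * znorm k ^ (-r)) := by
            rw [← mul_assoc, ← Real.rpow_add (by norm_num)]; simp
        _ ≤ _ := by gcongr

/-- the weight -/
def wt {m n : ℕ} (l : Fin m → Fin n → ℤ) : ℝ := 1 + ∑ i, ∑ a, ((l i a : ℝ)) ^ 2

theorem one_le_wt {m n : ℕ} (l : Fin m → Fin n → ℤ) : 1 ≤ wt l := by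
  unfold wt
  have : 0 ≤ ∑ i, ∑ a, ((l i a : ℝ)) ^ 2 :=
    Finset.sum_nonneg fun _ _ => Finset.sum_nonneg fun _ _ => sq_nonneg _
  linarith

theorem summable_wt (m n : ℕ) : Summable fun l : Fin m → Fin n → ℤ => ((wt l) ^ (m * n))⁻¹ := by
  have hb := summable_int_base 2 (by norm_num)
  have h := (pi_hasSum m (fun _ (v : Fin n → ℤ) => ∏ a, (((1 + (v a : ℝ) ^ 2) ^ (-2 / 2 : ℝ) : ℝ) : ℂ))
    (fun i => (pi_hasSum n (fun _ (k : ℤ) => (((1 + (k : ℝ) ^ 2) ^ (-2 / 2 : ℝ) : ℝ) : ℂ)) (fun i => by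
      refine hb.congr fun k => ?_
      rw [Complex.norm_real, Real.norm_of_nonneg (by positivity)])).1)).1
  refine Summable.of_nonneg_of_le (fun l => ?_) (fun l => ?_) h
  · have := one_le_wt l; positivity
  · have hw := one_le_wt l
    simp only [norm_prod]
    have : ∀ i ∈ Finset.univ, ∀ a ∈ Finset.univ, (wt l)⁻¹ ≤ ‖(((1 + (l i a : ℝ) ^ 2) ^ (-2 / 2 : ℝ) : ℝ) : ℂ)‖ := by
      intro i _ a _
      rw [Complex.norm_real, Real.norm_of_nonneg (by positivity)]
      rw [show (-2/2:ℝ) = -1 by norm_num, Real.rpow_neg_one]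
      apply inv_anti₀ (by positivity)
      unfold wt
      gcongr
      refine le_trans ?_ (Finset.single_le_sum (f := fun i => ∑ a, (l i a : ℝ)^2) (fun _ _ => Finset.sum_nonneg fun _ _ => sq_nonneg _) (Finset.mem_univ i))
      exact Finset.single_le_sum (f := fun a => (l i a : ℝ)^2) (fun _ _ => sq_nonneg _) (Finset.mem_univ a)
    have h3 := Finset.prod_le_prod (s := Finset.univ) (fun i _ => by positivity) fun i hi =>
      Finset.prod_le_prod (s := Finset.univ) (fun i _ => by positivity) (this i hi)
    refine le_trans (le_of_eq ?_) h3
    simp [← pow_mul, mul_comm]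

/-- rapidly decreasing with respect to a weight -/
def Rapid {Λ : Type*} (W : Λ → ℝ) (b : Λ → ℂ) : Prop := ∀ M : ℕ, Summable fun l => ‖b l‖ * W l ^ M

theorem rapid_of_schwartz {m n : ℕ} (b : (Fin m → Fin n → ℤ) → ℂ) (h : IsSchwartzSeq b) :
    Rapid wt b := by
  intro M
  obtain ⟨C, hC⟩ := h (2 * (M + m * n))
  refine Summable.of_nonneg_of_le (fun l => ?_) (fun l => ?_) ((summable_wt m n).mul_left (Real.sqrt C))
  · have := one_le_wt l; positivity
  · have hw := one_le_wt l
    have hw0 : 0 < wt l := by linarith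
    rw [le_mul_inv_iff₀ (by positivity)]
    apply Real.le_sqrt_of_sq_le
    refine le_trans (le_of_eq ?_) (hC l)
    change _ = (wt l) ^ _ * _
    ring

section
open scoped FourierTransform

/-- polynomial times gaussian -/
def gp (P : Polynomial ℂ) (x : ℝ) : ℂ := P.eval (x : ℂ) * Complex.exp (-Real.pi * (x:ℂ) ^ 2)

theorem gauss_norm (x : ℝ) : ‖Complex.exp (-Real.pi * (x:ℂ) ^ 2)‖ = Real.exp (-Real.pi * x ^ 2) := by
  rw [show (-Real.pi * (x:ℂ) ^ 2) = ((-Real.pi * x ^ 2 : ℝ) : ℂ) by push_cast; ring,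
    ← Complex.ofReal_exp, Complex.norm_real, Real.norm_of_nonneg (Real.exp_pos _).le]

theorem gp_bound (P : Polynomial ℂ) (M : ℕ) : ∃ C : ℝ, 0 ≤ C ∧ ∀ x : ℝ, (1 + x ^ 2) ^ M * ‖gp P x‖ ≤ C := by
  induction P using Polynomial.induction_on' with
  | add P R hP hR =>
    obtain ⟨C, hC0, hC⟩ := hP
    obtain ⟨D, hD0, hD⟩ := hR
    refine ⟨C + D, by positivity, fun x => ?_⟩
    have : gp (P + R) x = gp P x + gp R x := by simp [gp, add_mul]
    rw [this]
    calc _ ≤ (1 + x ^ 2) ^ M * (‖gp P x‖ + ‖gp R x‖) := by gcongr; exact norm_add_le _ _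
      _ ≤ _ := by rw [mul_add]; exact add_le_add (hC x) (hD x)
  | monomial i c =>
    refine ⟨‖c‖ * ((i + M).factorial * Real.exp 1), by positivity, fun x => ?_⟩
    have h1 : |x| ≤ 1 + x ^ 2 := by
      rw [← sq_abs]; nlinarith [sq_nonneg (|x| - 1), abs_nonneg x]
    have h2 : (1 + x ^ 2) ^ (i + M) ≤ (i + M).factorial * Real.exp (1 + x ^ 2) := by
      have := Real.pow_div_factorial_le_exp (1 + x^2) (by positivity) (i + M)
      rwa [div_le_iff₀ (by positivity), mul_comm] at this
    have h3 : Real.exp (-Real.pi * x ^ 2) ≤ Real.exp (- x ^ 2) := by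
      apply Real.exp_le_exp.2
      nlinarith [Real.pi_gt_three, sq_nonneg x]
    simp only [gp, Polynomial.eval_monomial, norm_mul, norm_pow, Complex.norm_real, Real.norm_eq_abs, gauss_norm]
    calc (1 + x ^ 2) ^ M * (‖c‖ * |x| ^ i * Real.exp (-Real.pi * x ^ 2))
        ≤ (1 + x ^ 2) ^ M * (‖c‖ * (1 + x ^ 2) ^ i * Real.exp (- x ^ 2)) := by gcongr
      _ = ‖c‖ * ((1 + x ^ 2) ^ (i + M) * Real.exp (- x ^ 2)) := by ring
      _ ≤ ‖c‖ * ((i + M).factorial * Real.exp (1 + x ^ 2) * Real.exp (- x ^ 2)) := by gcongr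
      _ = _ := by rw [mul_assoc, ← Real.exp_add]; congr 4; ring

theorem gp_continuous (P : Polynomial ℂ) : Continuous (gp P) := by
  unfold gp
  exact (P.continuous.comp Complex.continuous_ofReal).mul (by fun_prop)

theorem gp_integrable (P : Polynomial ℂ) : MeasureTheory.Integrable (gp P) := by
  obtain ⟨C, hC0, hC⟩ := gp_bound P 1
  refine (integrable_inv_one_add_sq.const_mul C).mono' (gp_continuous P).aestronglyMeasurable ?_
  refine Filter.Eventually.of_forall fun x => ?_
  rw [le_mul_inv_iff₀ (by positivity)]
  have := hC x
  rw [pow_one] at this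
  linarith

open Polynomial in
theorem gp_hasDerivAt (P : Polynomial ℂ) (x : ℝ) :
    HasDerivAt (gp P) (gp (derivative P - C (2 * Real.pi : ℂ) * X * P) x) x := by
  have h1 : HasDerivAt (fun z : ℂ => P.eval z * Complex.exp (-Real.pi * z ^ 2))
      (P.derivative.eval (x:ℂ) * Complex.exp (-Real.pi * (x:ℂ) ^ 2) + P.eval (x:ℂ) *
        (Complex.exp (-Real.pi * (x:ℂ) ^ 2) * (-Real.pi * (2 * (x:ℂ))))) (x:ℂ) := by
    refine (P.hasDerivAt _).mul ?_
    refine HasDerivAt.cexp ?_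
    have := (hasDerivAt_pow 2 (x:ℂ)).const_mul (-Real.pi : ℂ)
    simpa using this
  have h2 := h1.comp_ofReal
  have e : gp (derivative P - C (2 * Real.pi : ℂ) * X * P) x =
      (P.derivative.eval (x:ℂ) * Complex.exp (-Real.pi * (x:ℂ) ^ 2) + P.eval (x:ℂ) *
        (Complex.exp (-Real.pi * (x:ℂ) ^ 2) * (-Real.pi * (2 * (x:ℂ))))) := by
    simp only [gp, eval_sub, eval_mul, eval_C, eval_X]; ring
  rw [e]; exact h2

open Polynomial in
theorem gp_fourier (j : ℕ) : ∃ P : Polynomial ℂ, 𝓕 (gp P) = gp (X ^ j) := by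
  induction j with
  | zero =>
    refine ⟨1, ?_⟩
    have := fourier_gaussian_pi (b := 1) (by simp)
    simp only [mul_one, Complex.one_cpow, div_one, one_mul] at this
    unfold gp
    simpa using this
  | succ j ih =>
    obtain ⟨P, hP⟩ := ih
    refine ⟨C ((2 * Real.pi * Complex.I : ℂ)⁻¹) * (derivative P - C (2 * Real.pi : ℂ) * X * P), ?_⟩
    have hd : deriv (gp P) = gp (derivative P - C (2 * Real.pi : ℂ) * X * P) :=
      funext fun x => (gp_hasDerivAt P x).deriv
    have h := Real.fourier_deriv (gp_integrable P) (fun x => (gp_hasDerivAt P x).differentiableAt)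
      (by rw [hd]; exact gp_integrable _)
    rw [hd, hP] at h
    have e : gp (C ((2 * Real.pi * Complex.I : ℂ)⁻¹) * (derivative P - C (2 * Real.pi : ℂ) * X * P))
        = ((2 * Real.pi * Complex.I : ℂ)⁻¹) • gp (derivative P - C (2 * Real.pi : ℂ) * X * P) := by
      funext x; simp only [gp, Pi.smul_apply, smul_eq_mul, eval_mul, eval_C]; ring
    rw [e]
    have e2 : 𝓕 (((2 * Real.pi * Complex.I : ℂ)⁻¹) • gp (derivative P - C (2 * Real.pi : ℂ) * X * P))
      = ((2 * Real.pi * Complex.I : ℂ)⁻¹) • 𝓕 (gp (derivative P - C (2 * Real.pi : ℂ) * X * P)) := by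
      funext x
      simp only [Real.fourier_eq, Pi.smul_apply]
      rw [← MeasureTheory.integral_smul]
      congr 1; funext v
      rw [smul_comm]
    rw [e2, h]
    funext x
    have : (Real.pi : ℂ) ≠ 0 := by exact_mod_cast Real.pi_ne_zero
    simp only [gp, Pi.smul_apply, smul_eq_mul, eval_pow, eval_X]
    field_simp
    ring

theorem fourier_scale (f : ℝ → ℂ) (h : ℝ) (hh : 0 < h) (w : ℝ) :
    𝓕 (fun x => f (x / h)) w = h * 𝓕 f (h * w) := by
  simp only [Real.fourier_real_eq_integral_exp_smul]
  have := MeasureTheory.Measure.integral_comp_div (fun v : ℝ => Complex.exp (↑(-2 * Real.pi * v * (h * w)) * Complex.I) • f v) h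
  rw [abs_of_pos hh] at this
  rw [← Complex.real_smul, ← this]
  congr 1; funext v
  congr 4
  field_simp

/-- one-dimensional theta terms -/
def th (j : ℕ) (t y : ℝ) (k : ℤ) : ℂ :=
  (k : ℂ) ^ j * Complex.exp (-Real.pi * t * (k:ℂ) ^ 2) * Complex.exp (2 * Real.pi * Complex.I * k * y)

theorem th_norm (j : ℕ) (t y : ℝ) (k : ℤ) : ‖th j t y k‖ = |(k:ℝ)| ^ j * Real.exp (-Real.pi * t * (k:ℝ) ^ 2) := by
  unfold th
  rw [norm_mul, norm_mul, show (2 * Real.pi * Complex.I * k * y : ℂ) = ((2 * Real.pi * k * y : ℝ) : ℂ) * Complex.I by push_cast; ring,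
    Complex.norm_exp_ofReal_mul_I, mul_one, Complex.norm_exp]
  congr 1
  · rw [norm_pow, Complex.norm_intCast]
  · congr 1
    rw [show (-Real.pi * t * (k:ℂ) ^ 2) = ((-Real.pi * t * (k:ℝ) ^ 2 : ℝ) : ℂ) by push_cast; ring, Complex.ofReal_re]

theorem th_summable (j : ℕ) (t y : ℝ) (ht : 0 < t) : Summable fun k : ℤ => ‖th j t y k‖ := by
  obtain ⟨C, hC0, hC⟩ := gp_bound (Polynomial.X ^ j) 1
  have hb := (summable_int_base 2 (by norm_num))
  have hs : 0 < Real.sqrt t := Real.sqrt_pos.2 ht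
  refine Summable.of_nonneg_of_le (fun k => norm_nonneg _) (fun k => ?_) (hb.mul_left (C / (Real.sqrt t)^j * (1 + t⁻¹)))
  have h := hC (Real.sqrt t * k)
  rw [th_norm]
  simp only [gp, norm_mul, gauss_norm, Polynomial.eval_pow, Polynomial.eval_X, norm_pow, Complex.norm_real, Real.norm_eq_abs, mul_pow, Real.sq_sqrt ht.le, pow_one, abs_of_pos hs] at h
  rw [show (-2/2:ℝ) = -1 by norm_num, Real.rpow_neg_one, le_mul_inv_iff₀ (by positivity)]
  have e : |(k:ℝ)| ^ j * Real.exp (-Real.pi * t * (k:ℝ) ^ 2) = (Real.sqrt t ^ j * |(k:ℝ)| ^ j * Real.exp (-Real.pi * (t * k ^ 2))) / Real.sqrt t ^ j := by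
    field_simp
  rw [e]
  set E := (Real.sqrt t ^ j * |(k:ℝ)| ^ j * Real.exp (-Real.pi * (t * k ^ 2)))
  have hE : 0 ≤ E := by positivity
  have : 1 + (k:ℝ)^2 ≤ (1 + t * k^2) * (1 + t⁻¹) := by
    have : (1 + t * k^2) * (1 + t⁻¹) = 1 + t⁻¹ + t * k^2 + (k:ℝ)^2 := by field_simp; ring
    rw [this]
    have : 0 < t⁻¹ := by positivity
    nlinarith [mul_nonneg ht.le (sq_nonneg (k:ℝ))]
  calc E / Real.sqrt t ^ j * (1 + (k:ℝ)^2) ≤ E / Real.sqrt t ^ j * ((1 + t * k^2) * (1 + t⁻¹)) := by gcongr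
    _ = ((1 + t * k^2) * E) / Real.sqrt t ^ j * (1 + t⁻¹) := by ring
    _ ≤ _ := by gcongr

theorem gp_bigO (P : Polynomial ℂ) (h : ℝ) (hh : 0 < h) :
    (fun x => gp P (x / h)) =O[cocompact ℝ] fun x : ℝ => |x| ^ (-2 : ℝ) := by
  obtain ⟨C, hC0, hC⟩ := gp_bound P 1
  refine Asymptotics.IsBigO.of_bound (C * h ^ 2) ?_
  have : ∀ᶠ x : ℝ in cocompact ℝ, x ≠ 0 := by
    have := (isCompact_singleton (x := (0:ℝ))).compl_mem_cocompact
    filter_upwards [this] with x hx using hx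
  filter_upwards [this] with x hx
  have hx' : 0 < x ^ 2 := by positivity
  rw [Real.norm_of_nonneg (by positivity), Real.rpow_neg (abs_nonneg _)]
  norm_cast
  rw [sq_abs, le_mul_inv_iff₀ hx']
  have := hC (x / h)
  rw [pow_one, div_pow] at this
  have h3 : ‖gp P (x / h)‖ * x ^ 2 = h ^ 2 * (x ^ 2 / h ^ 2 * ‖gp P (x / h)‖) := by field_simp
  rw [h3, mul_comm C]
  gcongr
  refine le_trans ?_ this
  gcongr
  linarith

theorem poisson (j : ℕ) (P : Polynomial ℂ) (hP : 𝓕 (gp P) = gp (Polynomial.X ^ j)) (h y : ℝ) (hh : 0 < h) :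
    (h : ℂ) ^ (j + 1) * ∑' k : ℤ, th j (h ^ 2) y k = ∑' k : ℤ, gp P ((y + k) / h) := by
  have hF : ∀ k : ℤ, 𝓕 (fun x => gp P (x / h)) k * fourier k (y : UnitAddCircle) = (h:ℂ) ^ (j+1) * th j (h^2) y k := by
    intro k
    rw [fourier_scale _ _ hh, hP, fourier_coe_apply]
    simp only [gp, th, Polynomial.eval_pow, Polynomial.eval_X]
    push_cast
    rw [div_one]
    have : (-Real.pi * (h * k : ℂ) ^ 2) = -Real.pi * h ^ 2 * k ^ 2 := by ring
    rw [this]; ring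
  rw [← tsum_mul_left]
  have := Real.tsum_eq_tsum_fourier_of_rpow_decay_of_summable (f := fun x => gp P (x / h))
    ((gp_continuous P).comp (continuous_id.div_const h)) one_lt_two (gp_bigO P h hh) (by
      refine Summable.of_norm ?_
      refine ((th_summable j (h^2) y (by positivity)).mul_left (h ^ (j+1))).congr fun k => ?_
      have := congrArg norm (hF k)
      rw [norm_mul, norm_mul, norm_pow, Complex.norm_real, Real.norm_of_nonneg hh.le, fourier_coe_apply] at this
      rw [← this]
      rw [show (2 * Real.pi * Complex.I * k * y / (1:ℝ) : ℂ) = ((2 * Real.pi * k * y : ℝ) : ℂ) * Complex.I by push_cast; ring,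
        Complex.norm_exp_ofReal_mul_I, mul_one]) y
  rw [this]
  exact tsum_congr fun k => (hF k).symm

end

section
open scoped FourierTransform

theorem shift_sum_bound (P : Polynomial ℂ) (M : ℕ) : ∃ C : ℝ, 0 ≤ C ∧ ∀ (h y : ℝ) (_ : 0 < h) (_ : h ≤ 1)
    (_ : |y| ≤ 1) (S : Set ℤ) (η : ℝ) (_ : 0 < η) (_ : η ≤ 1) (_ : ∀ k ∈ S, M ≠ 0 → η ≤ |y + k|),
    Summable (fun k : ℤ => gp P ((y + k) / h)) ∧
    ‖∑' k : ℤ, S.indicator (fun k : ℤ => gp P ((y + k) / h)) k‖ ≤ C * (h / η) ^ M := by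
  obtain ⟨C0, hC00, hC0⟩ := gp_bound P 1
  obtain ⟨C, hC00, hC⟩ := gp_bound P (M + 1)
  have hb := (summable_int_base 2 (by norm_num))
  have key : ∀ (h y : ℝ), 0 < h → h ≤ 1 → |y| ≤ 1 → ∀ k : ℤ, 1 + (k:ℝ)^2 ≤ 3 * (1 + ((y + k)/h)^2) := by
    intro h y hh h1 hy k
    have : (y + k)^2 ≤ ((y+k)/h)^2 := by
      rw [div_pow, le_div_iff₀ (by positivity)]
      have : h^2 ≤ 1 := by nlinarith
      nlinarith [sq_nonneg (y+k)]
    have hy2 : y^2 ≤ 1 := by rw [← sq_abs]; nlinarith [abs_nonneg y]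
    nlinarith [sq_nonneg (2*y + k)]
  refine ⟨C * 3 * ∑' k : ℤ, (1 + (k : ℝ) ^ 2) ^ (-2 / 2 : ℝ), ?_, ?_⟩
  · have : 0 ≤ ∑' k : ℤ, (1 + (k : ℝ) ^ 2) ^ (-2 / 2 : ℝ) := tsum_nonneg fun k => by positivity
    positivity
  intro h y hh h1 hy S η hη hη1 hS
  constructor
  · refine Summable.of_norm_bounded (hb.mul_left (C0 * 3)) fun k => ?_
    rw [show (-2/2:ℝ) = -1 by norm_num, Real.rpow_neg_one, le_mul_inv_iff₀ (by positivity)]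
    have := hC0 ((y + k)/h)
    rw [pow_one] at this
    have := key h y hh h1 hy k
    nlinarith [norm_nonneg (gp P ((y + k)/h))]
  · refine le_trans (tsum_of_norm_bounded (hb.mul_left (C * 3 * (h/η)^M)).hasSum ?_) (le_of_eq ?_)
    · intro k
      by_cases hk : k ∈ S
      · rw [Set.indicator_of_mem hk, show (-2/2:ℝ) = -1 by norm_num, Real.rpow_neg_one, le_mul_inv_iff₀ (by positivity)]
        have h2 := hC ((y + k)/h)
        have h3 := key h y hh h1 hy k
        set u := 1 + ((y + k)/h)^2
        set G := ‖gp P ((y + k)/h)‖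
        have hG : 0 ≤ G := norm_nonneg _
        have hu : M ≠ 0 → η / h ≤ u := by
          intro hM
          have h4 := hS k hk hM
          have : η / h ≤ |(y+k)/h| := by rw [abs_div, abs_of_pos hh]; gcongr
          refine this.trans ?_
          simp only [u]
          rw [← sq_abs ((y+k)/h)]
          nlinarith [sq_nonneg (|(y+k)/h| - 1), abs_nonneg ((y+k)/h)]
        have hu0 : 0 < η / h := by positivity
        have h5 : (η/h)^M * (u * G) ≤ C := by
          refine le_trans ?_ h2
          rw [pow_succ, mul_assoc]
          rcases eq_or_ne M 0 with h0 | h0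
          · rw [h0]; simp
          · have := hu h0
            gcongr
        have h6 : u * G ≤ C * (h/η)^M := by
          rw [show h/η = (η/h)⁻¹ by rw [inv_div], inv_pow, le_mul_inv_iff₀ (by positivity)]
          linarith
        calc G * (1 + (k:ℝ)^2) ≤ G * (3 * u) := by gcongr
          _ = 3 * (u * G) := by ring
          _ ≤ 3 * (C * (h/η)^M) := by gcongr
          _ = _ := by ring
      · rw [Set.indicator_of_notMem hk]; simp; positivity
    · rw [tsum_mul_left]; ring

/-- theta sum -/
def TH (j : ℕ) (t y : ℝ) : ℂ := ∑' k : ℤ, th j t y k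

theorem TH_fract (j : ℕ) (t y : ℝ) : TH j t (Int.fract y) = TH j t y := by
  unfold TH th
  refine tsum_congr fun k => ?_
  congr 1
  rw [Complex.exp_eq_exp_iff_exists_int]
  refine ⟨- k * ⌊y⌋, ?_⟩
  have : ((Int.fract y : ℝ) : ℂ) = y - (⌊y⌋ : ℂ) := by
    rw [Int.fract]; push_cast; ring
  rw [this]; push_cast; ring

theorem TH_estimates (j : ℕ) : ∃ c : ℂ, ∀ M : ℕ, ∃ C : ℝ, 1 ≤ C ∧ ∀ h : ℝ, 0 < h → h ≤ 1 →
    (∀ y, ‖(h:ℂ) ^ (j+1) * TH j (h^2) y‖ ≤ C) ∧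
    (∀ y η : ℝ, 0 < η → (∀ m : ℤ, η ≤ |y - m|) → ‖(h:ℂ) ^ (j+1) * TH j (h^2) y‖ ≤ C * (h / η) ^ M) ∧
    ‖(h:ℂ) ^ (j+1) * TH j (h^2) 0 - c‖ ≤ C * h ^ M := by
  obtain ⟨P, hP⟩ := gp_fourier j
  refine ⟨gp P 0, fun M => ?_⟩
  obtain ⟨C, hC0, hC⟩ := shift_sum_bound P M
  obtain ⟨C', hC0', hC'⟩ := shift_sum_bound P 0
  obtain ⟨C1, hC10, hC1⟩ := gp_bound P 0
  refine ⟨1 + C + C' + C1, by linarith, fun h hh h1 => ⟨?_, ?_, ?_⟩⟩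
  · intro y
    rw [← TH_fract, TH, poisson j P hP h _ hh]
    have hfa : |Int.fract y| ≤ 1 := by rw [abs_of_nonneg (Int.fract_nonneg _)]; exact (Int.fract_lt_one _).le
    obtain ⟨hs, hb⟩ := hC' h (Int.fract y) hh h1 hfa Set.univ 1 one_pos le_rfl (by simp)
    rw [Set.indicator_univ, pow_zero] at hb
    refine hb.trans (by linarith)
  · intro y η hη hm
    have hfa : |Int.fract y| ≤ 1 := by rw [abs_of_nonneg (Int.fract_nonneg _)]; exact (Int.fract_lt_one _).le
    rw [← TH_fract, TH, poisson j P hP h _ hh]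
    have hη1 : η ≤ 1 := by
      have := hm ⌊y⌋
      rw [← Int.fract] at this; linarith
    obtain ⟨hs, hb⟩ := hC h (Int.fract y) hh h1 hfa Set.univ η hη hη1 (by
      intro k _ _
      have := hm (⌊y⌋ - k)
      rw [Int.fract]
      push_cast at this
      convert this using 2; ring)
    rw [Set.indicator_univ] at hb
    refine hb.trans ?_
    have : 0 < h / η := by positivity
    gcongr
    linarith
  · rw [TH, poisson j P hP h _ hh]
    obtain ⟨hs, hb⟩ := hC h 0 hh h1 (by simp) {0}ᶜ 1 (by norm_num) le_rfl (by
      intro k hk _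
      have : k ≠ 0 := hk
      have := Int.one_le_abs this
      rw [zero_add]; exact_mod_cast this)
    rw [← hs.sum_add_tsum_compl (s := {0}), Finset.sum_singleton, tsum_subtype (f := fun k : ℤ => gp P ((0 + k)/h))]
    simp only [Finset.coe_singleton]
    rw [div_one] at hb
    have e : gp P ((0 + ((0:ℤ):ℝ))/h) = gp P 0 := by congr 1; simp
    rw [e, add_sub_cancel_left]
    refine hb.trans ?_
    gcongr
    linarith

end

/-- phase -/
def ph {n : ℕ} (v : Fin n → ℝ) (k : Fin n → ℤ) : ℂ :=
  Complex.exp (2 * Real.pi * Complex.I * ∑ i, (k i : ℂ) * (v i : ℂ))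

theorem ph_norm {n : ℕ} (v : Fin n → ℝ) (k : Fin n → ℤ) : ‖ph v k‖ = 1 := by
  unfold ph
  rw [show (2 * Real.pi * Complex.I * ∑ i, (k i : ℂ) * (v i : ℂ)) =
    ((2 * Real.pi * ∑ i, (k i : ℝ) * (v i : ℝ) : ℝ) : ℂ) * Complex.I by push_cast; ring]
  exact Complex.norm_exp_ofReal_mul_I _

/-- terms of the zeta series with amplitude `φ` -/
def Zt {Λ : Type*} {n : ℕ} (b : Λ → ℂ) (y : Λ → Fin n → ℝ) (φ : Λ → (Fin n → ℤ) → ℂ) (s : ℂ)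
    (x : Λ × (Fin n → ℤ)) : ℂ :=
  if x.2 = 0 then 0 else b x.1 * φ x.1 x.2 * ph (y x.1) x.2 * ((znorm x.2 : ℂ) ^ s)⁻¹

theorem Zt_norm {Λ : Type*} {n : ℕ} (b : Λ → ℂ) (y : Λ → Fin n → ℝ) (φ : Λ → (Fin n → ℤ) → ℂ) (s : ℂ)
    (l : Λ) (k : Fin n → ℤ) (hk : k ≠ 0) : ‖Zt b y φ s (l, k)‖ = ‖b l‖ * ‖φ l k‖ * znorm k ^ (-s.re) := by
  have hz := one_le_znorm hk
  simp only [Zt, if_neg hk, norm_mul, ph_norm, norm_inv, mul_one]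
  rw [Complex.norm_cpow_eq_rpow_re_of_pos (by linarith), Real.rpow_neg (by linarith)]

theorem Zt_bound {Λ : Type*} {n : ℕ} (W : Λ → ℝ) (b : Λ → ℂ)
    (y : Λ → Fin n → ℝ) (φ : Λ → (Fin n → ℤ) → ℂ) (C : ℝ) (M : ℕ) (D : ℝ)
    (hφ : ∀ l k, k ≠ 0 → ‖φ l k‖ ≤ C * W l ^ M * znorm k ^ D) (σ : ℝ) (s : ℂ) (hs : σ ≤ s.re)
    (x : Λ × (Fin n → ℤ)) :
    ‖Zt b y φ s x‖ ≤ (C * (‖b x.1‖ * W x.1 ^ M)) * (if x.2 = 0 then 0 else znorm x.2 ^ (-(σ - D))) := by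
  obtain ⟨l, k⟩ := x
  by_cases hk : k = 0
  · simp [Zt, hk]
  · have hz := one_le_znorm hk
    rw [Zt_norm _ _ _ _ _ _ hk]
    simp only [if_neg hk]
    have h1 := hφ l k hk
    have h2 : znorm k ^ (-s.re) ≤ znorm k ^ (-σ) := Real.rpow_le_rpow_of_exponent_le hz (by linarith)
    have h0 : 0 ≤ znorm k ^ (-s.re) := Real.rpow_nonneg (by linarith) _
    calc ‖b l‖ * ‖φ l k‖ * znorm k ^ (-s.re) ≤ ‖b l‖ * (C * W l ^ M * znorm k ^ D) * znorm k ^ (-σ) := by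
          have := (norm_nonneg (φ l k)).trans h1
          gcongr
      _ = (C * (‖b l‖ * W l ^ M)) * (znorm k ^ D * znorm k ^ (-σ)) := by ring
      _ = _ := by
        rw [← Real.rpow_add (by linarith)]; congr 2; ring

theorem Zt_bound_summable {Λ : Type*} {n : ℕ} (hn : 0 < n) (W : Λ → ℝ) (b : Λ → ℂ) (hb : Rapid W b)
    (C : ℝ) (M : ℕ) (D : ℝ) (σ : ℝ) (hs : n + D < σ) :
    Summable fun x : Λ × (Fin n → ℤ) => (C * (‖b x.1‖ * W x.1 ^ M)) * (if x.2 = 0 then 0 else znorm x.2 ^ (-(σ - D))) := by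
  have h1 := summable_znorm n hn (σ - D) (by linarith)
  have h2 : Summable fun l => C * (‖b l‖ * W l ^ M) := (hb M).mul_left C
  have h3 := summable_mul_of_summable_norm h2.norm h1.norm
  refine h3.congr ?_
  intro x
  rfl

theorem Zt_summable {Λ : Type*} {n : ℕ} (hn : 0 < n) (W : Λ → ℝ) (b : Λ → ℂ) (hb : Rapid W b)
    (y : Λ → Fin n → ℝ) (φ : Λ → (Fin n → ℤ) → ℂ) (C : ℝ) (M : ℕ) (D : ℝ)
    (hφ : ∀ l k, k ≠ 0 → ‖φ l k‖ ≤ C * W l ^ M * znorm k ^ D) (s : ℂ) (hs : n + D < s.re) :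
    Summable fun x => ‖Zt b y φ s x‖ :=
  Summable.of_nonneg_of_le (fun _ => norm_nonneg _) (Zt_bound W b y φ C M D hφ s.re s le_rfl)
    (Zt_bound_summable hn W b hb C M D s.re hs)

theorem prod_sub_prod_le {ι : Type*} (S : Finset ι) (f g : ι → ℂ) (D ε : ℝ) (hD : 1 ≤ D) (hε : 0 ≤ ε)
    (hf : ∀ i, ‖f i‖ ≤ D) (hg : ∀ i, ‖g i‖ ≤ D) (h : ∀ i, ‖f i - g i‖ ≤ ε) :
    ‖∏ i ∈ S, f i - ∏ i ∈ S, g i‖ ≤ S.card * D ^ S.card * ε := by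
  classical
  induction S using Finset.induction_on with
  | empty => simp
  | insert a S ha ih =>
    rw [Finset.prod_insert ha, Finset.prod_insert ha, Finset.card_insert_of_notMem ha]
    have hS : ‖∏ i ∈ S, g i‖ ≤ D ^ S.card := by
      rw [norm_prod]
      refine (Finset.prod_le_prod (fun i _ => norm_nonneg _) (fun i _ => hg i)).trans ?_
      simp
    calc _ = ‖f a * (∏ i ∈ S, f i - ∏ i ∈ S, g i) + (f a - g a) * ∏ i ∈ S, g i‖ := by congr 1; ring
      _ ≤ ‖f a‖ * ‖∏ i ∈ S, f i - ∏ i ∈ S, g i‖ + ‖f a - g a‖ * ‖∏ i ∈ S, g i‖ := by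
        refine (norm_add_le _ _).trans ?_
        rw [norm_mul, norm_mul]
      _ ≤ D * (S.card * D ^ S.card * ε) + ε * D ^ S.card := by gcongr; exact hf a; exact h a
      _ ≤ D * (S.card * D ^ S.card * ε) + ε * (D * D ^ S.card) := by
        gcongr
        exact le_mul_of_one_le_left (by positivity) hD
      _ = _ := by push_cast; ring

/-- diophantine-type hypothesis on the phases -/
def Dio {Λ : Type*} {n : ℕ} (W : Λ → ℝ) (y : Λ → Fin n → ℝ) : Prop :=
  ∃ c : ℝ, 0 < c ∧ ∃ M : ℕ, ∀ l, y l = 0 ∨ ∃ i, ∀ m : ℤ, c / W l ^ M ≤ |y l i - m|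

theorem prodTH_estimate {Λ : Type*} {n : ℕ} (W : Λ → ℝ) (hW : ∀ l, 1 ≤ W l)
    (y : Λ → Fin n → ℝ) (hy : Dio W y) (α : Fin n → ℕ) :
    ∃ c : ℂ, ∀ M : ℕ, ∃ C : ℝ, ∃ M' : ℕ, ∀ h : ℝ, 0 < h → h ≤ 1 → ∀ l,
      (‖∏ i, ((h:ℂ) ^ (α i + 1) * TH (α i) (h^2) (y l i))‖ ≤ C) ∧
      ‖∏ i, ((h:ℂ) ^ (α i + 1) * TH (α i) (h^2) (y l i)) - (Set.indicator {l | y l = 0} (fun _ => c) l)‖ ≤ C * h ^ M * W l ^ M' := by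
  classical
  choose c hc using fun i => TH_estimates (α i)
  obtain ⟨c0, hc0, M0, hdio⟩ := hy
  refine ⟨∏ i, c i, fun M => ?_⟩
  choose C hC1 hC using fun i => hc i M
  set D : ℝ := 1 + ∑ i, 2 * C i with hD
  have hCD : ∀ i, 2 * C i ≤ D := by
    intro i
    have := Finset.single_le_sum (f := fun i => 2 * C i) (fun i _ => by linarith [hC1 i]) (Finset.mem_univ i)
    linarith
  have hD1 : 1 ≤ D := by
    have : 0 ≤ ∑ i, 2 * C i := Finset.sum_nonneg fun i _ => by linarith [hC1 i]
    linarith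
  have hB : ∀ h : ℝ, 0 < h → h ≤ 1 → ∀ (l : Λ) i, ‖(h:ℂ) ^ (α i + 1) * TH (α i) (h^2) (y l i)‖ ≤ D := by
    intro h hh h1 l i
    have := (hC i h hh h1).1 (y l i)
    linarith [hCD i, hC1 i]
  have hcD : ∀ i, ‖c i‖ ≤ D := by
    intro i
    have h1 := (hC i 1 one_pos le_rfl).1 0
    have h2 := (hC i 1 one_pos le_rfl).2.2
    simp only [one_pow, mul_one] at h2
    have h3 := norm_sub_norm_le (c i) (((1:ℝ):ℂ) ^ (α i + 1) * TH (α i) (1 ^ 2) 0)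
    rw [norm_sub_rev] at h3
    simp only [one_pow] at h1 h3
    linarith [hCD i]
  have hprod : ∀ h : ℝ, 0 < h → h ≤ 1 → ∀ (l : Λ), ∀ S : Finset (Fin n), ‖∏ i ∈ S, ((h:ℂ) ^ (α i + 1) * TH (α i) (h^2) (y l i))‖ ≤ D ^ n := by
    intro h hh h1 l S
    rw [norm_prod]
    refine (Finset.prod_le_prod (fun i _ => norm_nonneg _) (fun i _ => hB h hh h1 l i)).trans ?_
    rw [Finset.prod_const]
    exact pow_le_pow_right₀ hD1 (by simpa using S.card_le_univ)
  have hd0 : 0 ≤ (c0⁻¹)^M := by positivity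
  refine ⟨(n + 1) * D ^ n * D * (1 + c0⁻¹ ^ M), M0 * M, fun h hh h1 l => ⟨(hprod h hh h1 l _).trans ?_, ?_⟩⟩
  · have h2 : 0 ≤ D ^ n := by positivity
    have hn0 : (0:ℝ) ≤ n := by positivity
    calc D ^ n = 1 * D ^ n * 1 * 1 := by ring
      _ ≤ _ := by gcongr <;> linarith
  have hWl : 1 ≤ W l ^ (M0 * M) := one_le_pow₀ (hW l)
  have hW0 : 0 < W l := by linarith [hW l]
  by_cases hl : y l = 0
  · rw [Set.indicator_of_mem (by exact hl)]
    have key := prod_sub_prod_le Finset.univ (fun i => ((h:ℂ) ^ (α i + 1) * TH (α i) (h^2) (y l i))) c D (D * h ^ M) hD1 (by positivity)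
      (hB h hh h1 l) hcD (fun i => by
        rw [hl]
        refine ((hC i h hh h1).2.2).trans ?_
        gcongr; linarith [hCD i, hC1 i])
    refine key.trans ?_
    rw [Finset.card_univ, Fintype.card_fin]
    calc n * D ^ n * (D * h ^ M) = n * D ^ n * D * 1 * h ^ M * 1 := by ring
      _ ≤ _ := by gcongr <;> linarith
  · rw [Set.indicator_of_notMem (by exact hl), sub_zero]
    obtain ⟨i, hi⟩ := (hdio l).resolve_left hl
    have hη : 0 < c0 / W l ^ M0 := by positivity
    have h2 := (hC i h hh h1).2.1 (y l i) _ hη hi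
    rw [← Finset.mul_prod_erase _ _ (Finset.mem_univ i), norm_mul]
    have h3 := hprod h hh h1 l (Finset.univ.erase i)
    have e : (h / (c0 / W l ^ M0)) ^ M = c0⁻¹ ^ M * h ^ M * W l ^ (M0 * M) := by
      rw [div_div_eq_mul_div, div_pow, mul_pow, pow_mul, inv_pow]; field_simp
    rw [e] at h2
    calc _ ≤ (C i * (c0⁻¹ ^ M * h ^ M * W l ^ (M0 * M))) * D ^ n := by
          gcongr
          have := hC1 i
          positivity
      _ = 1 * D ^ n * C i * (c0⁻¹ ^ M) * h ^ M * W l ^ (M0 * M) := by ring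
      _ ≤ _ := by
        have hn0 : (0:ℝ) ≤ n := by positivity
        have := hC1 i
        gcongr
        · linarith
        · linarith [hCD i]
        · linarith

theorem locInt_indicator (g : ℝ → ℂ) (S T : Set ℝ) (hT : MeasurableSet T)
    (h : MeasureTheory.LocallyIntegrableOn g S) : MeasureTheory.LocallyIntegrableOn (T.indicator g) S := by
  intro x hx
  obtain ⟨u, hu, hi⟩ := h x hx
  exact ⟨u, hu, MeasureTheory.Integrable.indicator hi hT⟩

theorem mellin_abstract {ι : Type*} [Countable ι] (A : ι → ℂ) (P : ι → ℝ) (hP : ∀ i, A i = 0 ∨ 1 ≤ P i)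
    (hsum : ∀ t : ℝ, 0 < t → Summable fun i => ‖A i * (Real.exp (-Real.pi * P i * t) : ℝ)‖)
    (c c0 : ℂ) (a : ℝ) (ha : 0 < a)
    (hG : ∀ M : ℕ, ∃ C : ℝ, ∀ t : ℝ, 0 < t → t ≤ 1 →
      ‖(∑' i, A i * (Real.exp (-Real.pi * P i * t) : ℝ)) + c0 - c * (t : ℂ) ^ (-(a:ℂ))‖ ≤ C * t ^ M)
    (hD : ∀ σ : ℝ, a < σ → Summable fun i => ‖A i‖ / (P i) ^ σ) :
    ∃ H : ℂ → ℂ, Differentiable ℂ H ∧ ∀ w : ℂ, a < w.re → H w = (w - a) * ∑' i, A i / (P i : ℂ) ^ w := by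
  set G : ℝ → ℂ := fun t => ∑' i, A i * (Real.exp (-Real.pi * P i * t) : ℝ) with hGdef
  set I1 : ℝ → ℂ := (Set.Ioc (0:ℝ) 1).indicator (fun _ => 1 : ℝ → ℂ) with hI1
  set I2 : ℝ → ℂ := (Set.Ioc (0:ℝ) 1).indicator (fun t => (t:ℂ) ^ (-(a:ℂ)) : ℝ → ℂ) with hI2
  set f : ℝ → ℂ := fun t => (G t + c0 • I1 t) - c • I2 t with hf
  have hcont : ContinuousOn G (Set.Ioi 0) := by
    intro t ht
    have ht' : (0:ℝ) < t := ht
    have : ContinuousOn G (Set.Ioi (t/2)) := by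
      refine continuousOn_tsum (fun i => by fun_prop) (hsum (t/2) (by positivity)) ?_
      intro i x hx
      have hx' : t / 2 < x := hx
      rw [norm_mul, norm_mul]
      rcases hP i with h | h
      · simp [h]
      · gcongr
        rw [Complex.norm_real, Complex.norm_real, Real.norm_of_nonneg (Real.exp_pos _).le, Real.norm_of_nonneg (Real.exp_pos _).le]
        apply Real.exp_le_exp.2
        have : 0 < Real.pi * P i := by have := Real.pi_pos; positivity
        nlinarith
    exact (this.continuousAt (Ioi_mem_nhds (by linarith))).continuousWithinAt
  have hmeas : MeasurableSet (Set.Ioc (0:ℝ) 1) := measurableSet_Ioc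
  have hloc : MeasureTheory.LocallyIntegrableOn f (Set.Ioi 0) := by
    have hl1 : MeasureTheory.LocallyIntegrableOn I1 (Set.Ioi 0) :=
      locInt_indicator _ _ _ hmeas ((continuousOn_const (c := (1:ℂ))).locallyIntegrableOn measurableSet_Ioi)
    have hl2 : MeasureTheory.LocallyIntegrableOn I2 (Set.Ioi 0) := by
      refine locInt_indicator _ _ _ hmeas (ContinuousOn.locallyIntegrableOn ?_ measurableSet_Ioi)
      intro t ht
      exact (Complex.continuousAt_ofReal_cpow_const t _ (Or.inr (ne_of_gt ht))).continuousWithinAt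
    exact ((hcont.locallyIntegrableOn measurableSet_Ioi).add (hl1.smul c0)).sub (hl2.smul c)
  have hexp : ∀ t : ℝ, 0 < t → HasSum (fun i => A i * (Real.exp (-Real.pi * P i * t) : ℝ)) (G t) :=
    fun t ht => (hsum t ht).of_norm.hasSum
  have htop : f =O[atTop] fun t => Real.exp (-Real.pi * t) := by
    have h1 := (hsum 1 one_pos)
    refine Asymptotics.IsBigO.of_bound ((∑' i, ‖A i * (Real.exp (-Real.pi * P i * 1) : ℝ)‖) * Real.exp Real.pi) ?_
    filter_upwards [eventually_gt_atTop 1] with t ht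
    have e : f t = G t := by
      have : t ∉ Set.Ioc (0:ℝ) 1 := fun h => by linarith [h.2]
      simp [hf, hI1, hI2, Set.indicator_of_notMem this]
    rw [e, Real.norm_of_nonneg (Real.exp_pos _).le]
    have := tsum_of_norm_bounded (f := fun i => A i * (Real.exp (-Real.pi * P i * t) : ℝ)) (h1.mul_right (Real.exp Real.pi * Real.exp (-Real.pi * t))).hasSum (by
      intro i
      rcases hP i with h | h
      · simp [h]
      · rw [norm_mul, norm_mul, mul_assoc ‖A i‖]
        apply mul_le_mul_of_nonneg_left _ (norm_nonneg (A i))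
        rw [Complex.norm_real, Complex.norm_real, Real.norm_of_nonneg (Real.exp_pos _).le, Real.norm_of_nonneg (Real.exp_pos _).le,
          ← Real.exp_add, ← Real.exp_add]
        apply Real.exp_le_exp.2
        have : 0 ≤ Real.pi * ((P i - 1) * (t - 1)) := mul_nonneg Real.pi_pos.le (mul_nonneg (by linarith) (by linarith))
        nlinarith)
    rw [tsum_mul_right, ← mul_assoc] at this
    exact this
  have hbot : ∀ M : ℕ, f =O[𝓝[>] 0] fun t => t ^ (-(-(M:ℝ))) := by
    intro M
    obtain ⟨C, hC⟩ := hG M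
    refine Asymptotics.IsBigO.of_bound C ?_
    have : Set.Ioc (0:ℝ) 1 ∈ 𝓝[>] (0:ℝ) := Ioc_mem_nhdsGT one_pos
    filter_upwards [this] with t ht
    have e : f t = G t + c0 - c * (t : ℂ) ^ (-(a:ℂ)) := by
      simp [hf, hI1, hI2, Set.indicator_of_mem ht]
    rw [e, neg_neg, Real.rpow_natCast, Real.norm_of_nonneg (by have := ht.1; positivity)]
    exact hC t ht.1 ht.2
  have hmd : Differentiable ℂ (mellin f) := by
    intro w
    obtain ⟨M, hM⟩ := exists_nat_gt (-w.re)
    exact mellin_differentiableAt_of_isBigO_rpow_exp Real.pi_pos hloc htop (hbot M) (by linarith)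
  have hg := Complex.differentiable_one_div_Gamma
  refine ⟨fun w => (Real.pi : ℂ) ^ w * ((w - a) * (mellin f w * (Complex.Gamma w)⁻¹ - c0 * (Complex.Gamma (w + 1))⁻¹) + c * (Complex.Gamma w)⁻¹), ?_, ?_⟩
  · have h1 : Differentiable ℂ fun w : ℂ => (Complex.Gamma (w+1))⁻¹ := hg.comp (differentiable_id.add_const 1)
    have h2 : Differentiable ℂ fun w : ℂ => (Real.pi : ℂ) ^ w := by
      intro w
      exact (differentiableAt_id).const_cpow (Or.inl (by exact_mod_cast Real.pi_ne_zero))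
    exact h2.mul (((differentiable_id.sub_const _).mul ((hmd.mul hg).sub (h1.const_mul c0))).add (hg.const_mul c))
  · intro w hw
    have hw0 : 0 < w.re := by linarith
    have hwne : w ≠ 0 := fun h => by rw [h] at hw0; simp at hw0
    have hwa : w - a ≠ 0 := fun h => by
      have := congrArg Complex.re h; simp at this; linarith
    have hΓ : Complex.Gamma w ≠ 0 := Complex.Gamma_ne_zero_of_re_pos hw0
    have hm := hasSum_mellin_pi_mul (a := A) (q := P) (F := G) (s := w) (fun i => (hP i).imp id (fun h => by linarith)) hw0
      (fun t ht => hexp t ht) (hD _ hw)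
    have hcf : MellinConvergent f w := mellinConvergent_of_isBigO_rpow_exp Real.pi_pos hloc htop (hbot 0) (by simpa using hw0)
    have h1 := hasMellin_one_Ioc hw0
    have h2 := hasMellin_cpow_Ioc (-(a:ℂ)) (s := w) (by simp; linarith)
    have h1' := hasMellin_const_smul h1.1 c0
    have h2' := hasMellin_const_smul h2.1 c
    have h3 := hasMellin_add (hasMellin_sub hcf h1'.1).1 h2'.1
    have e : (fun t => (f t - c0 • I1 t) + c • I2 t) = G := by
      funext t; simp only [hf]; ring
    have h4 := h3.2
    rw [(hasMellin_sub hcf h1'.1).2, h1'.2, h2'.2, h1.2, h2.2] at h4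
    change mellin (fun t => (f t - c0 • I1 t) + c • I2 t) w = _ at h4
    rw [e] at h4
    have h5 := hm.tsum_eq
    rw [h4] at h5
    have e2 : ∀ i, (Real.pi:ℂ) ^ (-w) * Complex.Gamma w * A i / (P i : ℂ) ^ w = ((Real.pi:ℂ) ^ (-w) * Complex.Gamma w) * (A i / (P i : ℂ) ^ w) := fun i => by ring
    simp_rw [e2] at h5
    rw [tsum_mul_left] at h5
    have hpi : (Real.pi:ℂ) ^ w ≠ 0 := by
      rw [Complex.cpow_def_of_ne_zero (by exact_mod_cast Real.pi_ne_zero)]; exact Complex.exp_ne_zero _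
    beta_reduce
    rw [Complex.Gamma_add_one w hwne]
    rw [Complex.cpow_neg] at h5
    have h6 : ∑' i, A i / (P i : ℂ) ^ w = (Real.pi:ℂ)^w * (Complex.Gamma w)⁻¹ * (mellin f w - c0 • (1 / w) + c • (1 / (w + -(a:ℂ)))) := by
      rw [← h5]; field_simp
    rw [h6]
    have : w + -(a:ℂ) = w - a := by ring
    rw [this, smul_eq_mul, smul_eq_mul]
    field_simp

/-- theta series term on the product -/
def Bt {Λ : Type*} {n : ℕ} (b : Λ → ℂ) (y : Λ → Fin n → ℝ) (α : Fin n → ℕ) (t : ℝ)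
    (x : Λ × (Fin n → ℤ)) : ℂ := b x.1 * ∏ i, th (α i) t (y x.1 i) (x.2 i)

theorem prod_th {n : ℕ} (v : Fin n → ℝ) (α : Fin n → ℕ) (t : ℝ) (k : Fin n → ℤ) :
    ∏ i, th (α i) t (v i) (k i) = (∏ i, (k i : ℂ) ^ α i) * ph v k * (Real.exp (-Real.pi * (znorm k ^ 2) * t) : ℝ) := by
  unfold th ph
  rw [Finset.prod_mul_distrib, Finset.prod_mul_distrib, ← Complex.exp_sum, ← Complex.exp_sum, znorm_sq]
  push_cast
  rw [Finset.mul_sum, Finset.mul_sum, Finset.sum_mul]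
  have e1 : ∑ x, -(Real.pi : ℂ) * t * (k x : ℂ) ^ 2 = ∑ i, -(Real.pi : ℂ) * (k i : ℂ) ^ 2 * t :=
    Finset.sum_congr rfl fun i _ => by ring
  have e2 : ∑ x, 2 * (Real.pi : ℂ) * Complex.I * (k x : ℂ) * (v x : ℂ) = ∑ i, 2 * (Real.pi : ℂ) * Complex.I * ((k i : ℂ) * (v i : ℂ)) :=
    Finset.sum_congr rfl fun i _ => by ring
  rw [e1, e2]; ring

theorem Bt_summable {Λ : Type*} {n : ℕ} (b : Λ → ℂ) (hb : Summable fun l => ‖b l‖) (y : Λ → Fin n → ℝ) (α : Fin n → ℕ) (t : ℝ)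
    (ht : 0 < t) : Summable fun x => ‖Bt b y α t x‖ := by
  have h := (pi_hasSum n (fun i k => th (α i) t 0 k) (fun i => th_summable (α i) t 0 ht)).1
  refine (summable_mul_of_summable_norm hb.norm h.norm).congr ?_
  rintro ⟨l, k⟩
  simp only [Bt, norm_mul, norm_prod, th_norm, norm_norm]

theorem Bt_tsum {Λ : Type*} {n : ℕ} (b : Λ → ℂ) (hb : Summable fun l => ‖b l‖) (y : Λ → Fin n → ℝ) (α : Fin n → ℕ) (t : ℝ)
    (ht : 0 < t) : ∑' x, Bt b y α t x = ∑' l, b l * ∏ i, TH (α i) t (y l i) := by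
  have hs := (Bt_summable b hb y α t ht).of_norm
  rw [hs.tsum_prod]
  congr 1; funext l
  have h := (pi_hasSum n (fun i k => th (α i) t (y l i) k) (fun i => th_summable (α i) t (y l i) ht)).2
  simp only [Bt, tsum_mul_left, h, TH]

/-- nonconstant part -/
def At {Λ : Type*} {n : ℕ} (b : Λ → ℂ) (y : Λ → Fin n → ℝ) (α : Fin n → ℕ) 
    (x : Λ × (Fin n → ℤ)) : ℂ := if x.2 = 0 then 0 else b x.1 * (∏ i, (x.2 i : ℂ) ^ α i) * ph (y x.1) x.2

theorem At_tsum {Λ : Type*} {n : ℕ} (b : Λ → ℂ) (hb : Summable fun l => ‖b l‖) (y : Λ → Fin n → ℝ) (α : Fin n → ℕ) (t : ℝ)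
    (ht : 0 < t) : (Summable fun x => ‖At b y α x * (Real.exp (-Real.pi * (znorm x.2 ^ 2) * t) : ℝ)‖) ∧ 
    (∑' x, At b y α x * (Real.exp (-Real.pi * (znorm x.2 ^ 2) * t) : ℝ)) + ∑' l, b l * ∏ i, (0:ℂ) ^ α i = ∑' x, Bt b y α t x := by
  have hB := Bt_summable b hb y α t ht
  have e : ∀ x, At b y α x * (Real.exp (-Real.pi * (znorm x.2 ^ 2) * t) : ℝ) = if x.2 = 0 then 0 else Bt b y α t x := by
    rintro ⟨l, k⟩
    unfold At Bt
    by_cases hk : k = 0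
    · simp [hk]
    · simp only [if_neg hk, prod_th]; ring
  have h1 : Summable fun x => ‖At b y α x * (Real.exp (-Real.pi * (znorm x.2 ^ 2) * t) : ℝ)‖ := by
    refine Summable.of_nonneg_of_le (fun _ => norm_nonneg _) (fun x => ?_) hB
    rw [e]; split_ifs <;> simp
  refine ⟨h1, ?_⟩
  have h1' := h1.of_norm
  rw [hB.of_norm.tsum_prod, h1'.tsum_prod, ← Summable.tsum_add]
  · congr 1; funext l
    have hl := hB.of_norm.prod_factor l
    rw [hl.tsum_eq_add_tsum_ite 0, add_comm]
    congr 1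
    · simp only [Bt, prod_th]
      simp [ph, znorm]
    · congr 1; funext k; rw [e]
  · exact h1'.prod
  · exact (hb.of_norm).mul_right _

theorem mono_prod_le {n : ℕ} (α : Fin n → ℕ) (k : Fin n → ℤ) (hk : k ≠ 0) :
    ‖∏ i, (k i : ℂ) ^ α i‖ ≤ znorm k ^ (∑ i, α i) := by
  rw [norm_prod, ← Finset.prod_pow_eq_pow_sum]
  refine Finset.prod_le_prod (fun i _ => norm_nonneg _) fun i _ => ?_
  rw [norm_pow]
  gcongr
  have := abs_le_znorm k i
  simpa using this

theorem sq_cpow_half {x : ℝ} (hx : 0 < x) (s : ℂ) : ((x ^ 2 : ℝ) : ℂ) ^ (s / 2) = (x : ℂ) ^ s := by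
  rw [Complex.cpow_def_of_ne_zero (by exact_mod_cast (pow_pos hx 2).ne'), Complex.cpow_def_of_ne_zero (by exact_mod_cast hx.ne'),
    ← Complex.ofReal_log (by positivity), ← Complex.ofReal_log hx.le, Real.log_pow]
  congr 1; push_cast; ring

theorem mono_mero {Λ : Type*} [Countable Λ] {n : ℕ} (hn : 0 < n) (W : Λ → ℝ) (hW : ∀ l, 1 ≤ W l)
    (b : Λ → ℂ) (hb : Rapid W b)
    (y : Λ → Fin n → ℝ) (hy : Dio W y) (α : Fin n → ℕ) :
    ∃ H : ℂ → ℂ, Differentiable ℂ H ∧ ∀ s : ℂ, (n:ℝ) + (∑ i, α i : ℕ) < s.re →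
      H s = (s - ((n:ℂ) + (∑ i, α i : ℕ))) * ∑' x, Zt b y (fun _ k => ∏ i, (k i : ℂ) ^ α i) s x := by
  have hb0 : Summable fun l => ‖b l‖ := by simpa using hb 0
  obtain ⟨cp, hcp⟩ := prodTH_estimate W hW y hy α
  set d := ∑ i, α i with hd
  set I : Λ → ℂ := Set.indicator {l | y l = 0} (fun _ => cp) with hI
  have hIn : ∀ l, ‖I l‖ ≤ ‖cp‖ := fun l => norm_indicator_le_norm_self (fun _ => cp) l
  have hbI : Summable fun l => b l * I l := by
    refine Summable.of_norm_bounded (hb0.mul_right ‖cp‖) fun l => ?_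
    rw [norm_mul]; gcongr; exact hIn l
  have hphi : ∀ (l : Λ) (k : Fin n → ℤ), k ≠ 0 → ‖∏ i, (k i : ℂ) ^ α i‖ ≤ 1 * W l ^ 0 * znorm k ^ (d : ℝ) := by
    intro l k hk
    simpa using mono_prod_le α k hk
  have hn0 : (0:ℝ) < n := by exact_mod_cast hn
  obtain ⟨H, hH, hHe⟩ := mellin_abstract (At b y α) (fun x => znorm x.2 ^ 2) (by
      rintro ⟨l, k⟩
      by_cases hk : k = 0
      · left; simp [At, hk]
      · right; exact one_le_pow₀ (one_le_znorm hk))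
    (fun t ht => (At_tsum b hb0 y α t ht).1) (∑' l, b l * I l) (∑' l, b l * ∏ i, (0:ℂ) ^ α i)
    (((n:ℝ) + d) / 2) (by positivity) (by
      intro M
      obtain ⟨C, M', hC⟩ := hcp (2 * M + n + d)
      refine ⟨C * ∑' l, ‖b l‖ * W l ^ M', fun t ht ht1 => ?_⟩
      rw [(At_tsum b hb0 y α t ht).2, Bt_tsum b hb0 y α t ht]
      set h := Real.sqrt t with hh
      have hpos : 0 < h := Real.sqrt_pos.2 ht
      have hle : h ≤ 1 := Real.sqrt_le_one.2 ht1
      have hsq : h ^ 2 = t := Real.sq_sqrt ht.le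
      have ecp : (t:ℂ) ^ (-((((n:ℝ) + d) / 2 : ℝ) : ℂ)) = ((h:ℂ) ^ (n + d))⁻¹ := by
        rw [← Complex.ofReal_neg, ← Complex.ofReal_cpow ht.le, ← Complex.ofReal_pow, ← Complex.ofReal_inv]
        congr 1
        rw [Real.rpow_neg ht.le, ← hsq, ← Real.rpow_natCast h 2, ← Real.rpow_mul hpos.le, ← Real.rpow_natCast]
        congr 2
        push_cast; ring
      have hhne : (h:ℂ) ^ (n + d) ≠ 0 := pow_ne_zero _ (by exact_mod_cast hpos.ne')
      have eprod : ∀ l, ∏ i, ((h:ℂ) ^ (α i + 1) * TH (α i) (h^2) (y l i)) = (h:ℂ) ^ (n + d) * ∏ i, TH (α i) t (y l i) := by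
        intro l
        rw [Finset.prod_mul_distrib, Finset.prod_pow_eq_pow_sum, Finset.sum_add_distrib, hsq]
        congr 2
        simp [hd, add_comm]
      have hTs : Summable fun l => b l * ∏ i, TH (α i) t (y l i) := by
        have := (Bt_summable b hb0 y α t ht).of_norm.prod
        refine this.congr fun l => ?_
        have h := (pi_hasSum n (fun i k => th (α i) t (y l i) k) (fun i => th_summable (α i) t (y l i) ht)).2
        simp only [Bt, tsum_mul_left, h, TH]
      rw [ecp, ← tsum_mul_right, ← hTs.tsum_sub (hbI.mul_right _)]
      rw [← tsum_mul_left, ← tsum_mul_right]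
      refine tsum_of_norm_bounded (((hb M').mul_left C).mul_right _).hasSum fun l => ?_
      have h1 := (hC h hpos hle l).2
      rw [eprod l] at h1
      have e : b l * ∏ i, TH (α i) t (y l i) - b l * I l * ((h:ℂ) ^ (n + d))⁻¹ = 
        b l * (((h:ℂ) ^ (n + d) * ∏ i, TH (α i) t (y l i)) - I l) * ((h:ℂ) ^ (n + d))⁻¹ := by
        field_simp
      rw [e, norm_mul, norm_mul, norm_inv, norm_pow, Complex.norm_real, Real.norm_of_nonneg hpos.le]
      calc _ ≤ ‖b l‖ * (C * h ^ (2 * M + n + d) * W l ^ M') * (h ^ (n + d))⁻¹ := by gcongr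
        _ = _ := by
          rw [← hsq, add_assoc, pow_add, ← pow_mul]
          field_simp)
    (by
      intro σ hσ
      refine (Zt_summable hn W b hb y (fun _ k => ∏ i, (k i : ℂ) ^ α i) 1 0 d hphi ((2 * σ : ℝ) : ℂ) ?_).congr ?_
      · simp; linarith
      · rintro ⟨l, k⟩
        by_cases hk : k = 0
        · simp [Zt, At, hk]
        · rw [Zt_norm _ _ _ _ _ _ hk]
          simp only [At, if_neg hk, norm_mul, ph_norm, mul_one, Complex.ofReal_re]
          rw [Real.rpow_neg (znorm_nonneg _), Real.rpow_mul (znorm_nonneg _), div_eq_mul_inv]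
          norm_num)
  refine ⟨fun s => 2 * H (s / 2), ?_, ?_⟩
  · exact (hH.comp (differentiable_id.div_const 2)).const_mul 2
  · intro s hs
    have := hHe (s / 2) (by simp; linarith)
    simp only [this]
    have e : ∑' x, At b y α x / (((znorm x.2 ^ 2 : ℝ)) : ℂ) ^ (s / 2) = ∑' x, Zt b y (fun _ k => ∏ i, (k i : ℂ) ^ α i) s x := by
      congr 1; funext ⟨l, k⟩
      by_cases hk : k = 0
      · simp [Zt, At, hk]
      · simp only [Zt, At, if_neg hk, div_eq_mul_inv]
        congr 2
        exact sq_cpow_half (by linarith [one_le_znorm hk]) s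
    rw [e]
    push_cast; ring

/-- amplitudes of order `D` with polynomial bounds in `W` -/
def Bd {Λ : Type*} {n : ℕ} (W : Λ → ℝ) (D : ℤ) (φ : Λ → (Fin n → ℤ) → ℂ) : Prop :=
  ∃ C : ℝ, 0 ≤ C ∧ ∃ M : ℕ, ∀ l k, k ≠ 0 → ‖φ l k‖ ≤ C * W l ^ M * znorm k ^ D

/-- finite sums of homogeneous terms of order at most `D` -/
inductive Fn {Λ : Type*} {n : ℕ} (W : Λ → ℝ) : ℤ → (Λ → (Fin n → ℤ) → ℂ) → Prop
  | mono (c : Λ → ℂ) (α : Fin n → ℕ) (m D : ℤ) (C : ℝ) (M : ℕ) (hC : 0 ≤ C) (hc : ∀ l, ‖c l‖ ≤ C * W l ^ M)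
      (h : ((∑ i, α i : ℕ) : ℤ) - m ≤ D) :
      Fn W D (fun l k => c l * (∏ i, (k i : ℂ) ^ α i) * (znorm k : ℂ) ^ (-m))
  | add (D : ℤ) (φ ψ : Λ → (Fin n → ℤ) → ℂ) (h1 : Fn W D φ) (h2 : Fn W D ψ) : Fn W D (fun l k => φ l k + ψ l k)
  | congr (D : ℤ) (φ ψ : Λ → (Fin n → ℤ) → ℂ) (h1 : Fn W D φ) (h : ∀ l k, k ≠ 0 → φ l k = ψ l k) : Fn W D ψ

section
variable {Λ : Type*} {n : ℕ} {W : Λ → ℝ} (hW : ∀ l, 1 ≤ W l)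

theorem Bd.congr {D : ℤ} {φ ψ : Λ → (Fin n → ℤ) → ℂ} (h1 : Bd W D φ) (h : ∀ l k, k ≠ 0 → φ l k = ψ l k) : Bd W D ψ := by
  obtain ⟨C, h0, M, hC⟩ := h1
  exact ⟨C, h0, M, fun l k hk => by rw [← h l k hk]; exact hC l k hk⟩

theorem Bd.mono (hW : ∀ l, 1 ≤ W l) {D D' : ℤ} (hD : D ≤ D') {φ : Λ → (Fin n → ℤ) → ℂ} (h1 : Bd W D φ) : Bd W D' φ := by
  obtain ⟨C, h0, M, hC⟩ := h1
  refine ⟨C, h0, M, fun l k hk => (hC l k hk).trans ?_⟩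
  have := hW l
  have h2 := one_le_znorm hk
  gcongr

theorem Bd.add (hW : ∀ l, 1 ≤ W l) {D : ℤ} {φ ψ : Λ → (Fin n → ℤ) → ℂ} (h1 : Bd W D φ) (h2 : Bd W D ψ) :
    Bd W D (fun l k => φ l k + ψ l k) := by
  obtain ⟨C, h0, M, hC⟩ := h1
  obtain ⟨C', h0', M', hC'⟩ := h2
  refine ⟨C + C', by positivity, M + M', fun l k hk => (norm_add_le _ _).trans ?_⟩
  have hw := hW l
  have hz := one_le_znorm hk
  have hzp : 0 ≤ znorm k ^ D := by positivity
  calc _ ≤ C * W l ^ M * znorm k ^ D + C' * W l ^ M' * znorm k ^ D := add_le_add (hC l k hk) (hC' l k hk)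
    _ ≤ C * W l ^ (M + M') * znorm k ^ D + C' * W l ^ (M + M') * znorm k ^ D := by
      gcongr <;> first | exact hw | omega
    _ = _ := by ring

theorem Bd.mul (hW : ∀ l, 1 ≤ W l) {D D' : ℤ} {φ ψ : Λ → (Fin n → ℤ) → ℂ} (h1 : Bd W D φ) (h2 : Bd W D' ψ) :
    Bd W (D + D') (fun l k => φ l k * ψ l k) := by
  obtain ⟨C, h0, M, hC⟩ := h1
  obtain ⟨C', h0', M', hC'⟩ := h2
  refine ⟨C * C', by positivity, M + M', fun l k hk => ?_⟩
  have hw := hW l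
  have hz := one_le_znorm hk
  have hzp : 0 ≤ znorm k ^ D := by positivity
  rw [norm_mul]
  calc _ ≤ (C * W l ^ M * znorm k ^ D) * (C' * W l ^ M' * znorm k ^ D') := by
        have a := hC l k hk
        have b := hC' l k hk
        gcongr
    _ = _ := by
      rw [zpow_add₀ (by linarith), pow_add]; ring

theorem Bd.one : Bd W 0 (fun (_ : Λ) (_ : Fin n → ℤ) => (1:ℂ)) := ⟨1, by norm_num, 0, fun l k hk => by simp⟩

theorem Bd.pow (hW : ∀ l, 1 ≤ W l) {D : ℤ} {φ : Λ → (Fin n → ℤ) → ℂ} (h1 : Bd W D φ) (N : ℕ) :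
    Bd W (N * D) (fun l k => φ l k ^ N) := by
  induction N with
  | zero => simpa using Bd.one
  | succ N ih =>
    have := ih.mul hW h1
    refine (show ((N+1 : ℕ) : ℤ) * D = N * D + D by push_cast; ring) ▸ this.congr fun l k _ => ?_
    rw [pow_succ]

theorem Fn.bd (hW : ∀ l, 1 ≤ W l) {D : ℤ} {φ : Λ → (Fin n → ℤ) → ℂ} (h : Fn W D φ) : Bd W D φ := by
  induction h with
  | mono c α m D C M hC hc h =>
    refine ⟨C, hC, M, fun l k hk => ?_⟩
    have hz := one_le_znorm hk
    have hw := hW l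
    rw [norm_mul, norm_mul, norm_zpow, Complex.norm_real, Real.norm_of_nonneg (by linarith)]
    calc _ ≤ C * W l ^ M * znorm k ^ (∑ i, α i) * znorm k ^ (-m) := by
          gcongr
          · exact hc l
          · exact mono_prod_le α k hk
      _ = C * W l ^ M * znorm k ^ (((∑ i, α i : ℕ) : ℤ) - m) := by
          rw [sub_eq_add_neg, zpow_add₀ (by linarith), zpow_natCast]; ring
      _ ≤ _ := by gcongr
  | add D φ ψ h1 h2 i1 i2 => exact i1.add hW i2
  | congr D φ ψ h1 h i => exact i.congr h

theorem Fn.le {D D' : ℤ} (hD : D ≤ D') {φ : Λ → (Fin n → ℤ) → ℂ} (h : Fn W D φ) : Fn W D' φ := by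
  induction h with
  | mono c α m D C M hC hc h => exact Fn.mono c α m D' C M hC hc (h.trans hD)
  | add D φ ψ h1 h2 i1 i2 => exact Fn.add _ _ _ (i1 hD) (i2 hD)
  | congr D φ ψ h1 h i => exact Fn.congr _ _ _ (i hD) h

theorem Fn.mul (hW : ∀ l, 1 ≤ W l) {D D' : ℤ} {φ ψ : Λ → (Fin n → ℤ) → ℂ} (h1 : Fn W D φ) (h2 : Fn W D' ψ) :
    Fn W (D + D') (fun l k => φ l k * ψ l k) := by
  induction h1 with
  | mono c α m D C M hC hc h =>
    induction h2 with
    | mono c' α' m' D' C' M' hC' hc' h' =>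
      refine Fn.congr _ _ _ (Fn.mono (W := W) (fun l => c l * c' l) (fun i => α i + α' i) (m + m') (D + D') (C * C') (M + M') (by positivity)
        (fun l => ?_) ?_) ?_
      · rw [norm_mul, pow_add]
        have := hW l
        calc _ ≤ (C * W l ^ M) * (C' * W l ^ M') := mul_le_mul (hc l) (hc' l) (norm_nonneg _) (by positivity)
          _ = _ := by ring
      · rw [Finset.sum_add_distrib]; push_cast at *; linarith
      · intro l k hk
        have hz : (znorm k : ℂ) ≠ 0 := by
          have := one_le_znorm hk
          exact_mod_cast (by linarith : (0:ℝ) < znorm k).ne'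
        simp only [pow_add, Finset.prod_mul_distrib, neg_add]
        rw [zpow_add₀ hz]; ring
    | add D φ ψ h1 h2 i1 i2 => exact Fn.congr _ _ _ (Fn.add _ _ _ i1 i2) fun l k _ => by ring
    | congr D φ ψ h1 h i => exact Fn.congr _ _ _ i fun l k hk => by rw [h l k hk]
  | add D φ ψ h1 h2 i1 i2 => exact Fn.congr _ _ _ (Fn.add _ _ _ i1 i2) fun l k _ => by ring
  | congr D φ ψ h1 h i => exact Fn.congr _ _ _ i fun l k hk => by rw [h l k hk]

theorem Fn.const (D : ℤ) (hD : 0 ≤ D) (c : ℂ) : Fn W D (fun (_ : Λ) (_ : Fin n → ℤ) => c) :=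
  Fn.congr _ _ _ (Fn.mono (fun _ => c) (fun _ => 0) 0 D ‖c‖ 0 (norm_nonneg _) (by simp) (by simpa using hD)) (by simp)

theorem Fn.zero (D : ℤ) : Fn W D (fun (_ : Λ) (_ : Fin n → ℤ) => 0) :=
  Fn.congr _ _ _ (Fn.mono (fun _ => 0) (fun _ => 0) (-D) D 0 0 (le_refl _) (by simp) (by simp)) (by simp)

theorem Fn.sum {ι : Type*} (S : Finset ι) (D : ℤ) (φ : ι → Λ → (Fin n → ℤ) → ℂ) (h : ∀ i ∈ S, Fn W D (φ i)) :
    Fn W D (fun l k => ∑ i ∈ S, φ i l k) := by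
  classical
  induction S using Finset.induction_on with
  | empty => simpa using Fn.zero D
  | insert a S ha ih =>
    simp only [Finset.sum_insert ha]
    exact Fn.add _ _ _ (h a (by simp)) (ih fun i hi => h i (by simp [hi]))

theorem Fn.pow (hW : ∀ l, 1 ≤ W l) {D : ℤ} {φ : Λ → (Fin n → ℤ) → ℂ} (h1 : Fn W D φ) (N : ℕ) :
    Fn W (N * D) (fun l k => φ l k ^ N) := by
  induction N with
  | zero => simpa using Fn.const 0 le_rfl 1
  | succ N ih =>
    have := ih.mul hW h1
    refine (show ((N+1 : ℕ) : ℤ) * D = N * D + D by push_cast; ring) ▸ this.congr _ _ _ fun l k _ => ?_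
    rw [pow_succ]

/-- expansion to relative order `N` -/
def Ex (W : Λ → ℝ) (N : ℕ) (D : ℤ) (φ : Λ → (Fin n → ℤ) → ℂ) : Prop :=
  ∃ ψ, Fn W D ψ ∧ Bd W (D - N) (fun l k => φ l k - ψ l k)

theorem Fn.ex {D : ℤ} {φ : Λ → (Fin n → ℤ) → ℂ} (h : Fn W D φ) (N : ℕ) : Ex W N D φ :=
  ⟨φ, h, 0, le_rfl, 0, fun l k _ => by simp⟩

theorem Ex.bd (hW : ∀ l, 1 ≤ W l) {N : ℕ} {D : ℤ} {φ : Λ → (Fin n → ℤ) → ℂ} (h : Ex W N D φ) : Bd W D φ := by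
  obtain ⟨ψ, h1, h2⟩ := h
  exact (((h2.mono hW (by omega)).add hW (h1.bd hW))).congr fun l k _ => by ring

theorem Ex.mul (hW : ∀ l, 1 ≤ W l) {N : ℕ} {D D' : ℤ} {φ φ' : Λ → (Fin n → ℤ) → ℂ} (h : Ex W N D φ) (h' : Ex W N D' φ') :
    Ex W N (D + D') (fun l k => φ l k * φ' l k) := by
  have hb := h'.bd hW
  obtain ⟨ψ, h1, h2⟩ := h
  obtain ⟨ψ', h1', h2'⟩ := h'
  refine ⟨_, h1.mul hW h1', ?_⟩
  have e1 := (h2.mul hW hb).mono hW (show D - N + D' ≤ D + D' - N by omega)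
  have e2 := ((h1.bd hW).mul hW h2').mono hW (show D + (D' - N) ≤ D + D' - N by omega)
  exact (e1.add hW e2).congr fun l k _ => by ring

theorem Ex.pow (hW : ∀ l, 1 ≤ W l) {N : ℕ} {D : ℤ} {φ : Λ → (Fin n → ℤ) → ℂ} (h : Ex W N D φ) (p : ℕ) :
    Ex W N (p * D) (fun l k => φ l k ^ p) := by
  induction p with
  | zero => simpa using (Fn.const 0 le_rfl 1).ex N
  | succ p ih =>
    have := ih.mul hW h
    simp only [pow_succ]
    exact (show ((p+1 : ℕ) : ℤ) * D = p * D + D by push_cast; ring) ▸ this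

theorem Ex.prod (hW : ∀ l, 1 ≤ W l) {N : ℕ} {ι : Type*} (S : Finset ι) (D : ι → ℤ) (φ : ι → Λ → (Fin n → ℤ) → ℂ)
    (h : ∀ i ∈ S, Ex W N (D i) (φ i)) : Ex W N (∑ i ∈ S, D i) (fun l k => ∏ i ∈ S, φ i l k) := by
  classical
  induction S using Finset.induction_on with
  | empty => simpa using (Fn.const 0 le_rfl 1).ex N
  | insert a S ha ih =>
    simp only [Finset.sum_insert ha, Finset.prod_insert ha]
    exact (h a (by simp)).mul hW (ih fun i hi => h i (by simp [hi]))

theorem Fn.poly (Q : MvPolynomial (Fin n) ℝ) :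
    Fn W (Q.totalDegree) (fun (_ : Λ) (k : Fin n → ℤ) => ((MvPolynomial.eval (fun a => ((k a : ℤ) : ℝ)) Q : ℝ) : ℂ)) := by
  have := Fn.sum (W := W) (n := n) Q.support (Q.totalDegree) (fun m _ k => ((Q.coeff m : ℝ) : ℂ) * (∏ i, (k i : ℂ) ^ m i) * (znorm k : ℂ) ^ (-(0:ℤ)))
    (fun m hm => Fn.mono (fun _ => ((Q.coeff m : ℝ) : ℂ)) (fun i => m i) 0 _ ‖((Q.coeff m : ℝ) : ℂ)‖ 0 (norm_nonneg _) (by simp) (by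
      have := MvPolynomial.le_totalDegree hm
      rw [Finsupp.sum_fintype _ _ (by simp)] at this
      simpa using (by exact_mod_cast this : ((∑ i, m i : ℕ) : ℤ) ≤ Q.totalDegree)))
  refine this.congr _ _ _ fun l k hk => ?_
  rw [MvPolynomial.eval_eq']
  push_cast
  simp
end

theorem sqrt_taylor (N : ℕ) (hN : 1 ≤ N) : ∃ c : ℕ → ℝ, ∃ C : ℝ, 0 ≤ C ∧ ∀ x : ℝ, -1 ≤ x →
    |Real.sqrt (1 + x) - ∑ j ∈ Finset.range N, c j * x ^ j| ≤ C * |x| ^ N := by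
  have ha : AnalyticAt ℝ (fun x : ℝ => Real.sqrt (1 + x)) 0 := by
    have h1 : AnalyticAt ℝ Real.sqrt (1 + 0) := by
      rw [add_zero]
      exact (Real.contDiffAt_sqrt (n := ⊤) one_ne_zero).analyticAt
    exact h1.comp (by fun_prop : AnalyticAt ℝ (fun x : ℝ => 1 + x) 0)
  obtain ⟨p, hp⟩ := ha
  have hO := hp.isBigO_sub_partialSum_pow N
  obtain ⟨C0, hC0⟩ := hO.bound
  rw [Metric.eventually_nhds_iff] at hC0
  obtain ⟨ε, hε, hb⟩ := hC0
  have hps : ∀ y : ℝ, p.partialSum N y = ∑ j ∈ Finset.range N, p.coeff j * y ^ j := by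
    intro y
    unfold FormalMultilinearSeries.partialSum
    refine Finset.sum_congr rfl fun j _ => ?_
    rw [FormalMultilinearSeries.apply_eq_pow_smul_coeff, smul_eq_mul, mul_comm]
  set K := (1 + ε + ∑ j ∈ Finset.range N, |p.coeff j| * ε ^ j) with hK
  have hK0 : 0 ≤ K := by positivity
  refine ⟨p.coeff, |C0| + K / ε ^ N, by positivity, fun x hx => ?_⟩
  rw [add_mul]
  by_cases hxe : |x| < ε
  · have h1 := hb (y := x) (by simpa using hxe)
    rw [hps, zero_add, Real.norm_eq_abs, Real.norm_of_nonneg (by positivity), Real.norm_eq_abs] at h1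
    have h2 : C0 * |x| ^ N ≤ |C0| * |x| ^ N := by gcongr; exact le_abs_self _
    have h3 : 0 ≤ K / ε ^ N * |x| ^ N := by positivity
    linarith
  · have hxe : ε ≤ |x| := not_lt.1 hxe
    set u := |x| / ε with hu
    have hu1 : 1 ≤ u := by rwa [hu, le_div_iff₀ hε, one_mul]
    have hxu : |x| = ε * u := by rw [hu]; field_simp
    have e : K / ε ^ N * |x| ^ N = K * u ^ N := by rw [hxu, mul_pow]; field_simp
    have h1 : 1 ≤ u ^ N := one_le_pow₀ hu1
    have h2 : u ≤ u ^ N := by simpa using pow_le_pow_right₀ hu1 hN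
    have hs : Real.sqrt (1 + x) ≤ 1 + |x| := by
      apply Real.sqrt_le_iff.2
      refine ⟨by positivity, ?_⟩
      nlinarith [le_abs_self x, abs_nonneg x]
    have hsum : |∑ j ∈ Finset.range N, p.coeff j * x ^ j| ≤ (∑ j ∈ Finset.range N, |p.coeff j| * ε ^ j) * u ^ N := by
      refine (Finset.abs_sum_le_sum_abs _ _).trans ?_
      rw [Finset.sum_mul]
      refine Finset.sum_le_sum fun j hj => ?_
      rw [abs_mul, abs_pow, hxu, mul_pow, ← mul_assoc]
      have : u ^ j ≤ u ^ N := pow_le_pow_right₀ hu1 (Finset.mem_range.1 hj).le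
      gcongr
    have h4 : 0 ≤ |C0| * |x| ^ N := by positivity
    have h5 := abs_sub (Real.sqrt (1 + x)) (∑ j ∈ Finset.range N, p.coeff j * x ^ j)
    rw [abs_of_nonneg (Real.sqrt_nonneg _)] at h5
    rw [e, hK]
    nlinarith

section
variable {Λ : Type*} {n : ℕ} {W : Λ → ℝ}

theorem Ex.shift (hW : ∀ l, 1 ≤ W l) (lam : Λ → Fin n → ℤ) (hl : ∀ l i, |(lam l i : ℝ)| ≤ W l) (N : ℕ) (hN : 1 ≤ N) :
    Ex W N 1 (fun l k => (znorm (k + lam l) : ℂ)) := by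
  obtain ⟨c, C, hC0, hC⟩ := sqrt_taylor N hN
  set X : Λ → (Fin n → ℤ) → ℂ := fun l k => (∑ i, (2 * (lam l i : ℂ)) * (∏ j, (k j : ℂ) ^ (Pi.single i 1 : Fin n → ℕ) j) * (znorm k : ℂ) ^ (-(2:ℤ)))
    + (∑ i, (lam l i : ℂ) ^ 2) * (∏ j, (k j : ℂ) ^ ((fun _ => 0 : Fin n → ℕ) j)) * (znorm k : ℂ) ^ (-(2:ℤ)) with hX
  have hXF : Fn W (-1) X := by
    refine Fn.add _ _ _ (Fn.sum _ _ _ fun i _ => Fn.mono _ _ _ _ 2 1 (by norm_num) (fun l => ?_) ?_) (Fn.mono _ _ _ _ n 2 (by positivity) (fun l => ?_) ?_)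
    · have := hl l i
      simpa using this
    · simp
    · refine (norm_sum_le _ _).trans ?_
      calc ∑ i, ‖(lam l i : ℂ) ^ 2‖ ≤ ∑ i : Fin n, W l ^ 2 := Finset.sum_le_sum fun i _ => by
            have := hl l i
            have h0 := hW l
            rw [norm_pow]
            gcongr
            simpa using this
        _ = _ := by simp
    · simp
  have key : ∀ l (k : Fin n → ℤ), k ≠ 0 → ∃ x : ℝ, -1 ≤ x ∧ X l k = x ∧ znorm (k + lam l) = znorm k * Real.sqrt (1 + x) := by
    intro l k hk
    have hz := one_le_znorm hk
    have hz2 : 0 < znorm k ^ 2 := by positivity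
    have e : znorm (k + lam l) ^ 2 = znorm k ^ 2 + (∑ i, 2 * (lam l i : ℝ) * k i) + ∑ i, (lam l i : ℝ) ^ 2 := by
      rw [znorm_sq, znorm_sq, ← Finset.sum_add_distrib, ← Finset.sum_add_distrib]
      refine Finset.sum_congr rfl fun i _ => ?_
      simp only [Pi.add_apply]; push_cast; ring
    have e1 : 1 + (znorm (k + lam l) ^ 2 / znorm k ^ 2 - 1) = (znorm (k + lam l) / znorm k) ^ 2 := by
      rw [div_pow]; ring
    refine ⟨znorm (k + lam l) ^ 2 / znorm k ^ 2 - 1, ?_, ?_, ?_⟩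
    · have : 0 ≤ znorm (k + lam l) ^ 2 / znorm k ^ 2 := by positivity
      linarith
    · have hne : (znorm k : ℂ) ≠ 0 := by exact_mod_cast (by linarith : (0:ℝ) < znorm k).ne'
      have : znorm (k + lam l) ^ 2 / znorm k ^ 2 - 1 = ((∑ i, 2 * (lam l i : ℝ) * k i) + ∑ i, (lam l i : ℝ) ^ 2) / znorm k ^ 2 := by
        rw [e]; field_simp; ring
      rw [this, hX]
      have e3 : ∀ i : Fin n, ∏ j, (k j : ℂ) ^ (Pi.single i 1 : Fin n → ℕ) j = k i := by
        intro i
        rw [Finset.prod_eq_single i]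
        · simp
        · intro j _ hj; simp [hj]
        · simp
      simp only [e3, ← Finset.sum_mul, pow_zero, Finset.prod_const_one, mul_one]
      push_cast
      rw [zpow_neg]
      norm_cast
      push_cast
      field_simp
    · rw [e1, Real.sqrt_sq (by have := znorm_nonneg (k + lam l); positivity)]
      field_simp
  have hk1 : Fn W 1 (fun (_ : Λ) (k : Fin n → ℤ) => (znorm k : ℂ)) :=
    Fn.congr _ _ _ (Fn.mono (W := W) (fun _ => (1:ℂ)) (fun _ => 0) (-1) 1 1 0 (by norm_num) (by simp) (by simp)) (by simp)
  have hsum : Fn W 0 (fun l k => ∑ j ∈ Finset.range N, (c j : ℂ) * X l k ^ j) := by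
    refine Fn.sum _ _ _ fun j _ => ?_
    have := (Fn.const (W := W) (n := n) 0 le_rfl (c j : ℂ)).mul hW (hXF.pow hW j)
    exact this.le (by simp)
  refine ⟨_, hk1.mul hW hsum, ?_⟩
  have hb := ((hk1.bd hW).mul hW ((hXF.bd hW).pow hW N))
  obtain ⟨C', h0', M, hM⟩ := hb
  refine ⟨C * C', by positivity, M, fun l k hk => ?_⟩
  have h1 := hM l k hk
  obtain ⟨x, hx, hxX, hxe⟩ := key l k hk
  have h2 := hC x hx
  have hz := one_le_znorm hk
  beta_reduce at h1 ⊢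
  rw [hxe]
  rw [hxX] at h1 ⊢
  have e : ((znorm k * Real.sqrt (1 + x) : ℝ) : ℂ) - (znorm k : ℂ) * ∑ j ∈ Finset.range N, (c j : ℂ) * (x : ℂ) ^ j
    = ((znorm k * (Real.sqrt (1 + x) - ∑ j ∈ Finset.range N, c j * x ^ j) : ℝ) : ℂ) := by
    push_cast; ring
  rw [e, Complex.norm_real, norm_mul, Real.norm_eq_abs, Real.norm_eq_abs, abs_of_nonneg (by linarith)]
  have h3 : znorm k * |x| ^ N ≤ C' * W l ^ M * znorm k ^ (1 + (N:ℤ) * -1) := by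
    refine le_trans (le_of_eq ?_) h1
    rw [norm_mul, norm_pow, Complex.norm_real, Complex.norm_real, Real.norm_eq_abs, Real.norm_eq_abs, abs_of_nonneg (a := znorm k) (by linarith)]
  calc _ ≤ znorm k * (C * |x| ^ N) := by gcongr
    _ = C * (znorm k * |x| ^ N) := by ring
    _ ≤ C * (C' * W l ^ M * znorm k ^ (1 + (N:ℤ) * -1)) := by gcongr
    _ = _ := by
      rw [show (1 + (N:ℤ) * -1) = 1 - N by ring]; ring
end

section
variable {Λ : Type*} {n : ℕ} {W : Λ → ℝ}

theorem Bd.summable (hn : 0 < n) (b : Λ → ℂ) (hb : Rapid W b) (y : Λ → Fin n → ℝ) {D : ℤ}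
    {φ : Λ → (Fin n → ℤ) → ℂ} (h : Bd W D φ) (s : ℂ) (hs : (n:ℝ) + D < s.re) :
    Summable fun x => Zt b y φ s x := by
  obtain ⟨C, _, M, hC⟩ := h
  refine (Zt_summable hn W b hb y φ C M D (fun l k hk => ?_) s hs).of_norm
  rw [Real.rpow_intCast]; exact hC l k hk

theorem Bd.holo (hn : 0 < n) (b : Λ → ℂ) (hb : Rapid W b) (y : Λ → Fin n → ℝ) {D : ℤ}
    {φ : Λ → (Fin n → ℤ) → ℂ} (h : Bd W D φ) :
    DifferentiableOn ℂ (fun s => ∑' x, Zt b y φ s x) {s | (n:ℝ) + D < s.re} := by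
  obtain ⟨C, _, M, hC⟩ := h
  intro s hs
  have hs : (n:ℝ) + D < s.re := hs
  obtain ⟨σ, h1, h2⟩ := exists_between hs
  have hopen : IsOpen {s : ℂ | σ < s.re} := isOpen_lt continuous_const Complex.continuous_re
  have := Complex.differentiableOn_tsum_of_summable_norm (F := fun x s => Zt b y φ s x)
    (Zt_bound_summable hn W b hb C M D σ h1) (U := {s : ℂ | σ < s.re}) (fun x => ?_) hopen
    (fun x s hs => Zt_bound W b y φ C M D (fun l k hk => by rw [Real.rpow_intCast]; exact hC l k hk) σ s (le_of_lt hs) x)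
  · exact (this.differentiableAt (hopen.mem_nhds h2)).differentiableWithinAt
  · obtain ⟨l, k⟩ := x
    by_cases hk : k = 0
    · simp only [Zt, hk, if_true]; fun_prop
    · simp only [Zt, if_neg hk]
      have hz : (znorm k : ℂ) ≠ 0 := by
        have := one_le_znorm hk
        exact_mod_cast (by linarith : (0:ℝ) < znorm k).ne'
      intro s _
      have hd : DifferentiableAt ℂ (fun s : ℂ => (znorm k : ℂ) ^ s) s := differentiableAt_id.const_cpow (Or.inl hz)
      refine DifferentiableAt.differentiableWithinAt ((hd.inv ?_).const_mul _)
      rw [Complex.cpow_def_of_ne_zero hz]; exact Complex.exp_ne_zero _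

/-- the polynomial killing the first `N` poles -/
def Pk (B : ℂ) (N : ℕ) (s : ℂ) : ℂ := ∏ m ∈ Finset.range N, (s - (B - m))

theorem Pk_diff (B : ℂ) (N : ℕ) : Differentiable ℂ (Pk B N) := by
  unfold Pk; fun_prop

theorem Rapid.mulc (hW : ∀ l, 1 ≤ W l) (b : Λ → ℂ) (hb : Rapid W b) (c : Λ → ℂ) (C : ℝ) (M : ℕ)
    (hc : ∀ l, ‖c l‖ ≤ C * W l ^ M) : Rapid W (fun l => b l * c l) := by
  intro K
  refine Summable.of_nonneg_of_le (fun l => ?_) (fun l => ?_) ((hb (M + K)).mul_left C)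
  · have := hW l; positivity
  · have := hW l
    rw [norm_mul, pow_add]
    calc _ ≤ ‖b l‖ * (C * W l ^ M) * W l ^ K := by gcongr; exact hc l
      _ = _ := by ring

theorem Fn.adm [Countable Λ] (hn : 0 < n) (hW : ∀ l, 1 ≤ W l) (b : Λ → ℂ) (hb : Rapid W b) (y : Λ → Fin n → ℝ)
    (hy : Dio W y) {D : ℤ} {ψ : Λ → (Fin n → ℤ) → ℂ} (h : Fn W D ψ) :
    ∃ N0 : ℕ, ∀ N, N0 ≤ N → ∃ H : ℂ → ℂ, Differentiable ℂ H ∧ ∀ s : ℂ, (n:ℝ) + D < s.re →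
      H s = (∑' x, Zt b y ψ s x) * Pk ((n:ℂ) + D) N s := by
  induction h with
  | mono c α m D C M hC hc h =>
    set d := ∑ i, α i with hd
    obtain ⟨H, hH, hHe⟩ := mono_mero hn W hW _ (hb.mulc hW b c C M hc) y hy α
    refine ⟨(D - (d - m)).toNat + 1, fun N hN => ?_⟩
    set r := (D - (d - m)).toNat with hr
    have hrD : (r : ℤ) = D - (d - m) := Int.toNat_of_nonneg (by linarith)
    refine ⟨fun s => H (s + m) * ∏ j ∈ (Finset.range N).erase r, (s - ((n:ℂ) + D - j)), by fun_prop, fun s hs => ?_⟩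
    have hmd : (d:ℝ) - m ≤ D := by exact_mod_cast h
    beta_reduce
    rw [hHe (s + m) (by rw [← hd]; simp only [Complex.add_re, Complex.intCast_re]; linarith), Pk, ← Finset.mul_prod_erase _ _ (Finset.mem_range.2 (by omega : r < N))]
    have e1 : (s + m - ((n:ℂ) + d)) = s - ((n:ℂ) + D - r) := by
      have : (r:ℂ) = D - (d - m) := by exact_mod_cast congrArg (Int.cast : ℤ → ℂ) hrD
      rw [this]; ring
    have e2 : ∑' x, Zt (fun l => b l * c l) y (fun _ k => ∏ i, (k i : ℂ) ^ α i) (s + m) x =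
        ∑' x, Zt b y (fun l k => c l * (∏ i, (k i : ℂ) ^ α i) * (znorm k : ℂ) ^ (-m)) s x := by
      congr 1; funext ⟨l, k⟩
      by_cases hk : k = 0
      · simp [Zt, hk]
      · simp only [Zt, if_neg hk]
        have hz : (znorm k : ℂ) ≠ 0 := by
          have := one_le_znorm hk
          exact_mod_cast (by linarith : (0:ℝ) < znorm k).ne'
        rw [Complex.cpow_add _ _ hz, Complex.cpow_intCast, zpow_neg, mul_inv]; ring
    rw [e1, e2]; ring
  | add D φ ψ h1 h2 i1 i2 =>
    obtain ⟨N1, g1⟩ := i1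
    obtain ⟨N2, g2⟩ := i2
    refine ⟨max N1 N2, fun N hN => ?_⟩
    obtain ⟨H1, d1, e1⟩ := g1 N (le_trans (le_max_left _ _) hN)
    obtain ⟨H2, d2, e2⟩ := g2 N (le_trans (le_max_right _ _) hN)
    refine ⟨fun s => H1 s + H2 s, d1.add d2, fun s hs => ?_⟩
    beta_reduce
    rw [e1 s hs, e2 s hs, ← add_mul, ← Summable.tsum_add ((h1.bd hW).summable hn b hb y s hs) ((h2.bd hW).summable hn b hb y s hs)]
    congr 2; funext x
    unfold Zt; split_ifs
    · simp
    · ring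
  | congr D φ ψ h1 h i =>
    have : ∀ s x, Zt b y ψ s x = Zt b y φ s x := by
      intro s x
      unfold Zt; split_ifs with hx
      · rfl
      · rw [h _ _ hx]
    simpa only [this] using i

theorem Ex.adm [Countable Λ] (hn : 0 < n) (hW : ∀ l, 1 ≤ W l) (b : Λ → ℂ) (hb : Rapid W b) (y : Λ → Fin n → ℝ)
    (hy : Dio W y) {D : ℤ} {φ : Λ → (Fin n → ℤ) → ℂ} {N : ℕ} (h : Ex W N D φ) :
    ∃ N' : ℕ, N ≤ N' ∧ ∃ H : ℂ → ℂ, DifferentiableOn ℂ H {s | (n:ℝ) + D - N < s.re} ∧ ∀ s : ℂ, (n:ℝ) + D < s.re →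
      H s = (∑' x, Zt b y φ s x) * Pk ((n:ℂ) + D) N' s := by
  obtain ⟨ψ, h1, h2⟩ := h
  obtain ⟨N0, hN0⟩ := h1.adm hn hW b hb y hy
  obtain ⟨H, hH, hHe⟩ := hN0 (max N N0) (le_max_right _ _)
  refine ⟨max N N0, le_max_left _ _, fun s => H s + (∑' x, Zt b y (fun l k => φ l k - ψ l k) s x) * Pk ((n:ℂ) + D) (max N N0) s, ?_, ?_⟩
  · have h3 := h2.holo hn b hb y
    have : {s : ℂ | (n:ℝ) + (D - N : ℤ) < s.re} = {s : ℂ | (n:ℝ) + D - N < s.re} := by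
      ext s; simp only [Set.mem_ofPred_eq]; push_cast; rw [add_sub_assoc]
    rw [this] at h3
    exact hH.differentiableOn.add (h3.mul (Pk_diff _ _).differentiableOn)
  · intro s hs
    beta_reduce
    rw [hHe s hs, ← add_mul, ← Summable.tsum_add ((h1.bd hW).summable hn b hb y s hs) (h2.summable hn b hb y s (by push_cast; linarith [Nat.cast_nonneg (α := ℝ) N]))]
    congr 2; funext x
    unfold Zt; split_ifs
    · simp
    · ring
end

theorem Pk_ne {B : ℝ} {N : ℕ} {s : ℂ} (h : ∀ m : ℕ, s ≠ (B:ℂ) - m) : Pk B N s ≠ 0 := by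
  unfold Pk
  exact Finset.prod_ne_zero_iff.2 fun m _ => sub_ne_zero.2 (h m)

theorem glue (B : ℝ) (f : ℂ → ℂ)
    (h : ∀ N : ℕ, ∃ N' : ℕ, N ≤ N' ∧ ∃ H : ℂ → ℂ, DifferentiableOn ℂ H {s | B - N < s.re} ∧ ∀ s : ℂ, B < s.re → H s = f s * Pk B N' s) :
    ∃ g : ℂ → ℂ, DifferentiableOn ℂ g {s : ℂ | ∀ m : ℕ, s ≠ (B:ℂ) - m} ∧ (∀ s : ℂ, B < s.re → g s = f s) ∧
      ∀ m : ℕ, ∃ R : ℂ, Tendsto (fun s => (s - ((B:ℂ) - m)) * g s) (𝓝[≠] ((B:ℂ) - m)) (𝓝 R) := by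
  choose N' hN' H hH hHe using h
  have hopen : ∀ c : ℝ, IsOpen {s : ℂ | c < s.re} := fun c => isOpen_lt continuous_const Complex.continuous_re
  have hcons : ∀ N K : ℕ, N ≤ K → ∀ s : ℂ, B - N < s.re → H N s * Pk B (N' K) s = H K s * Pk B (N' N) s := by
    intro N K hNK
    have hcv : Convex ℝ {s : ℂ | B - N < s.re} := convex_halfSpace_re_gt _
    have hd1 : DifferentiableOn ℂ (fun s => H N s * Pk B (N' K) s) {s : ℂ | B - N < s.re} :=
      (hH N).mul (Pk_diff _ _).differentiableOn
    have hd2 : DifferentiableOn ℂ (fun s => H K s * Pk B (N' N) s) {s : ℂ | B - N < s.re} :=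
      ((hH K).mono (fun s hs => by
        have h1 : B - N < s.re := hs
        have h2 : (N:ℝ) ≤ K := by exact_mod_cast hNK
        show B - K < s.re
        linarith)).mul (Pk_diff _ _).differentiableOn
    have := (hd1.analyticOnNhd (hopen _)).eqOn_of_preconnected_of_eventuallyEq (hd2.analyticOnNhd (hopen _)) hcv.isPreconnected
      (z₀ := ((B + 1 : ℝ) : ℂ)) (by simp; linarith [Nat.cast_nonneg (α := ℝ) N]) (by
        filter_upwards [(hopen B).mem_nhds (by simp : ((B + 1 : ℝ) : ℂ) ∈ {s : ℂ | B < s.re})] with s hs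
        rw [hHe N s hs, hHe K s hs]; ring)
    exact fun s hs => this hs
  set ν : ℂ → ℕ := fun s => ⌈B - s.re⌉₊ + 1 with hν
  have hνs : ∀ s, B - ν s < s.re := by
    intro s
    have := Nat.le_ceil (B - s.re)
    simp only [hν]; push_cast; linarith
  set g : ℂ → ℂ := fun s => H (ν s) s / Pk B (N' (ν s)) s with hg
  have hgN : ∀ (N : ℕ) (s : ℂ), B - N < s.re → (∀ m : ℕ, s ≠ (B:ℂ) - m) → g s = H N s / Pk B (N' N) s := by
    intro N s hs hm
    simp only [hg]
    rw [div_eq_div_iff (Pk_ne hm) (Pk_ne hm)]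
    rcases le_total N (ν s) with h | h
    · exact (hcons N _ h s hs).symm
    · exact hcons _ N h s (hνs s)
  have hnp : ∀ (N : ℕ) (s : ℂ), B - N < s.re → Pk B (N' N) s ≠ 0 → ∀ m : ℕ, s ≠ (B:ℂ) - m := by
    intro N s hs hp m hm
    apply hp
    have h1 : m < N := by
      rw [hm] at hs
      simp at hs
      exact hs
    exact Finset.prod_eq_zero (Finset.mem_range.2 (lt_of_lt_of_le h1 (hN' N))) (by rw [hm]; ring)
  refine ⟨g, ?_, ?_, ?_⟩
  · intro s hs
    have hs : ∀ m : ℕ, s ≠ (B:ℂ) - m := hs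
    have hd : DifferentiableAt ℂ (fun t => H (ν s) t / Pk B (N' (ν s)) t) s :=
      ((hH _).differentiableAt ((hopen _).mem_nhds (hνs s))).div (Pk_diff _ _ s) (Pk_ne hs)
    refine (hd.congr_of_eventuallyEq ?_).differentiableWithinAt
    filter_upwards [(hopen _).mem_nhds (hνs s), (Pk_diff B (N' (ν s)) s).continuousAt.eventually_ne (Pk_ne hs)] with t h1 h2
    exact hgN _ t h1 (hnp _ t h1 h2)
  · intro s hs
    have hm : ∀ m : ℕ, s ≠ (B:ℂ) - m := by
      intro m h
      rw [h] at hs; simp at hs; linarith [Nat.cast_nonneg (α := ℝ) m]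
    rw [hgN 0 s (by simpa using hs) hm, hHe 0 s hs, mul_div_cancel_right₀ _ (Pk_ne hm)]
  · intro m
    set z : ℂ := (B:ℂ) - m with hz
    set N := m + 1 with hN
    have hzN : B - N < z.re := by simp [hz, hN]
    have hmN : m ∈ Finset.range (N' N) := Finset.mem_range.2 (lt_of_lt_of_le (Nat.lt_succ_self m) (hN' N))
    set P : ℂ → ℂ := fun s => ∏ j ∈ (Finset.range (N' N)).erase m, (s - ((B:ℂ) - j)) with hP
    have hPz : P z ≠ 0 := by
      refine Finset.prod_ne_zero_iff.2 fun j hj => ?_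
      rw [hz]
      have : (j:ℂ) ≠ m := by exact_mod_cast (Finset.ne_of_mem_erase hj)
      intro h
      apply this
      linear_combination h
    refine ⟨H N z / P z, ?_⟩
    have hc : ContinuousAt (fun s => H N s / P s) z := by
      refine ContinuousAt.div ((hH N).differentiableAt ((hopen _).mem_nhds hzN)).continuousAt ?_ hPz
      simp only [hP]; fun_prop
    refine (hc.tendsto.mono_left nhdsWithin_le_nhds).congr' ?_
    have ev1 : ∀ᶠ s in 𝓝[≠] z, B - N < s.re := nhdsWithin_le_nhds ((hopen _).mem_nhds hzN)
    have ev2 : ∀ᶠ s in 𝓝[≠] z, P s ≠ 0 := nhdsWithin_le_nhds ((show ContinuousAt P z by simp only [hP]; fun_prop).eventually_ne hPz)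
    filter_upwards [ev1, ev2, self_mem_nhdsWithin] with s h1 h2 h3
    have h3 : s ≠ z := h3
    have h4 : Pk B (N' N) s = (s - z) * P s := by
      rw [Pk, ← Finset.mul_prod_erase _ _ hmN]
    have h5 : s - z ≠ 0 := sub_ne_zero.2 h3
    rw [hgN N s h1 (hnp N s h1 (by rw [h4]; exact mul_ne_zero h5 h2)), h4]
    field_simp

theorem part_sum_le {m n : ℕ} (l : Fin m → Fin n → ℤ) (F : Finset (Fin m)) :
    ∑ i, |(((∑ t ∈ F, l t) i : ℤ) : ℝ)| ≤ wt l := by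
  have h1 : ∀ i, |(((∑ t ∈ F, l t) i : ℤ) : ℝ)| ≤ ∑ t, ((l t i : ℝ)) ^ 2 := by
    intro i
    rw [Finset.sum_apply]
    push_cast
    refine (Finset.abs_sum_le_sum_abs _ _).trans ?_
    refine (Finset.sum_le_univ_sum_of_nonneg (fun t => abs_nonneg _)).trans ?_
    refine Finset.sum_le_sum fun t _ => ?_
    have : |l t i| ≤ (l t i) ^ 2 := by
      rw [← sq_abs]
      rcases eq_or_ne (l t i) 0 with h | h
      · simp [h]
      · have := Int.one_le_abs h
        nlinarith
    exact_mod_cast this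
  refine (Finset.sum_le_sum fun i _ => h1 i).trans ?_
  rw [Finset.sum_comm, wt]
  linarith

theorem dio_of {q n : ℕ} (T : Matrix (Fin n) (Fin n) ℝ) (hT : IsDiophantineMatrix T) :
    Dio (wt (m := 2 * q) (n := n)) (fun l => T.mulVec fun j => ((lsumq l j : ℤ) : ℝ)) := by
  obtain ⟨u, δ, hδ, c, hc, h⟩ := hT
  obtain ⟨M, hM⟩ := exists_nat_ge δ
  set U : ℝ := 1 + ∑ i, |(u i : ℝ)| with hU
  have hU1 : 1 ≤ U := by
    have : 0 ≤ ∑ i, |(u i : ℝ)| := Finset.sum_nonneg fun _ _ => abs_nonneg _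
    linarith
  refine ⟨c / U, by positivity, M, fun l => ?_⟩
  by_cases hl : lsumq l = 0
  · left
    simp only [hl]
    ext i; simp [Matrix.mulVec, dotProduct]
  right
  by_contra! hcon
  choose m hm using hcon
  have h1 := h (lsumq l) hl (∑ i, u i * m i)
  set y := T.mulVec fun j => ((lsumq l j : ℤ) : ℝ) with hy
  have e : ∑ i, ((lsumq l i : ℤ) : ℝ) * (T.transpose.mulVec fun i => (u i : ℝ)) i = ∑ i, (u i : ℝ) * y i := by
    have := Matrix.dotProduct_mulVec (fun i => (u i : ℝ)) T (fun j => ((lsumq l j : ℤ) : ℝ))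
    rw [← Matrix.mulVec_transpose, dotProduct_comm (T.transpose.mulVec _)] at this
    exact this.symm
  rw [e] at h1
  push_cast at h1
  rw [← Finset.sum_sub_distrib] at h1
  have hW := one_le_wt l
  have hz1 := one_le_znorm hl
  have hzW : znorm (lsumq l) ≤ wt l := (znorm_le_sum _).trans (part_sum_le l _)
  have h2 : 1 / wt l ^ M ≤ znorm (lsumq l) ^ (-δ) := by
    rw [Real.rpow_neg (by linarith), one_div]
    apply inv_anti₀ (by positivity)
    rw [← Real.rpow_natCast]
    calc _ ≤ znorm (lsumq l) ^ (M:ℝ) := Real.rpow_le_rpow_of_exponent_le hz1 hM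
      _ ≤ _ := Real.rpow_le_rpow (by linarith) hzW (by positivity)
  have h3 : |∑ i, ((u i : ℝ) * y i - u i * m i)| ≤ (U - 1) * (c / U / wt l ^ M) := by
    refine (Finset.abs_sum_le_sum_abs _ _).trans ?_
    rw [hU, add_sub_cancel_left, Finset.sum_mul]
    refine Finset.sum_le_sum fun i _ => ?_
    rw [← mul_sub, abs_mul]
    gcongr
    exact (hm i).le
  have h4 : c * (1 / wt l ^ M) ≤ c * znorm (lsumq l) ^ (-δ) := by gcongr
  have h5 : (U - 1) * (c / U / wt l ^ M) = c * (1 / wt l ^ M) - c / U / wt l ^ M := by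
    field_simp
  have h6 : 0 < c / U / wt l ^ M := by positivity
  linarith

/-- **Theorem.** Let `q ≥ 2`, `p ∈ ℕ₀^{q-1}` with some `pᵢ ≠ 0`, `Q ∈ ℝ[X₁,…,Xₙ]`
of degree `d`, `(1/2π)Θ` a diophantine matrix, and `ã ∈ 𝒮((ℤⁿ)^{2q})`.  Then
`f(s) = Σ_l ã_l Σ'_k ∏_{i=1}^{q-1}|k+l̃ᵢ|^{pᵢ} |k|^{-s} Q(k) e^{ik·Θ(l₁+⋯+l_q)}`
has a meromorphic continuation to `ℂ` with at most simple poles, all contained in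
`{n + d + |p|₁ − m : m ∈ ℕ₀}`. -/
theorem bigZeta_meromorphic (n q : ℕ) (hn : 0 < n) (hq : 2 ≤ q)
    (p : Fin (q - 1) → ℕ) (hp : ∃ i, p i ≠ 0)
    (Q : MvPolynomial (Fin n) ℝ)
    (Θ : Matrix (Fin n) (Fin n) ℝ)
    (hΘ : IsDiophantineMatrix ((2 * Real.pi)⁻¹ • Θ))
    (a : (Fin (2 * q) → Fin n → ℤ) → ℂ) (ha : IsSchwartzSeq a) :
    ∃ g : ℂ → ℂ,
      DifferentiableOn ℂ g
        {s : ℂ | ∀ m : ℕ,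
          s ≠ (n : ℂ) + (Q.totalDegree : ℂ) + (∑ i, (p i : ℂ)) - (m : ℂ)} ∧
      (∀ s : ℂ, (n : ℝ) + (Q.totalDegree : ℝ) + (∑ i, (p i : ℝ)) < s.re →
        g s = ∑' l : Fin (2 * q) → Fin n → ℤ,
          a l * ∑' k : Fin n → ℤ, bigTerm p Q Θ s l k) ∧
      (∀ m : ℕ, ∃ R : ℂ,
        Tendsto
          (fun s => (s - ((n : ℂ) + (Q.totalDegree : ℂ) + (∑ i, (p i : ℂ)) - (m : ℂ))) * g s)
          (𝓝[≠] ((n : ℂ) + (Q.totalDegree : ℂ) + (∑ i, (p i : ℂ)) - (m : ℂ)))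
          (𝓝 R)) := by


  set B : ℝ := (n : ℝ) + (Q.totalDegree : ℝ) + (∑ i, (p i : ℝ)) with hB
  set T := (2 * Real.pi)⁻¹ • Θ with hT
  set y : (Fin (2 * q) → Fin n → ℤ) → Fin n → ℝ := fun l => T.mulVec fun j => ((lsumq l j : ℤ) : ℝ) with hy
  have hdio : Dio (wt (m := 2 * q) (n := n)) y := dio_of T hΘ
  have hb := rapid_of_schwartz a ha
  have hW : ∀ l : Fin (2 * q) → Fin n → ℤ, 1 ≤ wt l := one_le_wt
  set φ : (Fin (2 * q) → Fin n → ℤ) → (Fin n → ℤ) → ℂ := fun l k =>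
    (∏ i : Fin (q - 1), ((znorm (k + ltilde l ((i : ℕ) + 1)) : ℝ) : ℂ) ^ (p i)) *
      ((MvPolynomial.eval (fun a => ((k a : ℤ) : ℝ)) Q : ℝ) : ℂ) with hφ
  set D : ℤ := (∑ i, (p i : ℤ)) + Q.totalDegree with hD
  have hBD : (n:ℝ) + (D:ℝ) = B := by rw [hB, hD]; push_cast; ring
  have hBC : (n:ℂ) + (D:ℂ) = (B:ℂ) := by rw [← hBD]; push_cast; ring
  have hex : ∀ N : ℕ, 1 ≤ N → Ex wt N D φ := by
    intro N hN
    refine Ex.mul hW (Ex.prod hW _ _ _ fun i _ => ?_) ((Fn.poly Q).ex N)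
    have := (Ex.shift hW (fun l => ltilde l ((i : ℕ) + 1)) (fun l j => ?_) N hN).pow hW (p i)
    · simpa using this
    · refine le_trans ?_ (part_sum_le l (Finset.univ.filter
        (fun t : Fin (2 * q) => (t : ℕ) < (i : ℕ) + 1 ∨ (q ≤ (t : ℕ) ∧ (t : ℕ) < q + ((i : ℕ) + 1)))))
      exact Finset.single_le_sum (f := fun j => |((ltilde l ((i : ℕ) + 1) j : ℤ) : ℝ)|) (fun _ _ => abs_nonneg _) (Finset.mem_univ j)
  have hterm : ∀ s l k, a l * bigTerm p Q Θ s l k = Zt a y φ s (l, k) := by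
    intro s l k
    unfold bigTerm Zt
    by_cases hk : k = 0
    · simp [hk]
    · simp only [if_neg hk, hφ]
      have : Complex.exp (Complex.I * ((∑ a, (k a : ℝ) * (Θ.mulVec fun j => ((lsumq l j : ℤ) : ℝ)) a : ℝ) : ℂ)) = ph (y l) k := by
        unfold ph
        congr 1
        have e : ∀ i, (Θ.mulVec fun j => ((lsumq l j : ℤ) : ℝ)) i = 2 * Real.pi * y l i := by
          intro i
          simp only [hy, hT, Matrix.smul_mulVec, Pi.smul_apply, smul_eq_mul]
          have := Real.pi_pos
          field_simp
        simp only [e]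
        push_cast
        rw [Finset.mul_sum, Finset.mul_sum]
        exact Finset.sum_congr rfl fun i _ => by ring
      rw [this]; ring
  obtain ⟨g, h1, h2, h3⟩ := glue B (fun s => ∑' x, Zt a y φ s x) (by
    intro N
    obtain ⟨N', hN', H, hH, hHe⟩ := (hex (N + 1) (by omega)).adm hn hW a hb y hdio
    refine ⟨N', by omega, H, hH.mono fun s hs => ?_, fun s hs => ?_⟩
    · have hs : B - N < s.re := hs
      show (n:ℝ) + D - ((N + 1 : ℕ) : ℝ) < s.re
      rw [hBD]; push_cast; linarith
    · rw [hHe s (by rw [hBD]; exact hs), hBC])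
  have hBC' : (n : ℂ) + (Q.totalDegree : ℂ) + (∑ i, (p i : ℂ)) = (B : ℂ) := by rw [hB]; push_cast; ring
  rw [hBC']
  refine ⟨g, h1, fun s hs => ?_, h3⟩
  rw [h2 s hs]
  have hs' := ((hex 1 le_rfl).bd hW).summable hn a hb y s (by rw [hBD]; exact hs)
  rw [hs'.tsum_prod]
  congr 1; funext l
  rw [← tsum_mul_left]
  congr 1; funext k
  exact (hterm s l k).symm

end
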